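/- arXiv:2103.08706 — 2 statements merged into one kernel-verified Lean document; each statement's English description precedes it below -/
import Mathlib

section
/- The ring 𝒜_n of germs at 0 ∈ ℝ^n of real analytic real-valued functions is a Noetherian ring, and for every m ≥ 1 the 𝒜_n-module 𝒜_n^m of germs at 0 of real analytic maps into ℝ^m is a Noetherian 𝒜_n-module. -/
open MeasureTheory Metric Filter Set
open scoped ENNReal NNReal Topology

noncomputable section

namespace Zhang

/-- `ℝ^n` with the Euclidean norm. -/
abbrev Euc (n : ℕ) := EuclideanSpace ℝ (Fin n)

/-- Vector fields on `ℝ^n` (as everywhere-defined maps). -/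
abbrev VF (n : ℕ) := Euc n → Euc n

/-- `ν`-parameter degrees. -/
abbrev Deg (ν : ℕ) := Fin ν → ℝ

variable {N ν n q : ℕ}

/-- Admissible multi-parameter dilation data `e = {e_1,…,e_N} ⊆ [0,∞)^ν`. -/
def AdmissibleE (e : Fin N → Fin ν → ℝ) : Prop :=
  (∀ i μ, 0 ≤ e i μ) ∧ (∀ i, ∃ μ, e i μ ≠ 0) ∧ (∀ μ, ∃ i, e i μ ≠ 0)

/-- `δ^d = ∏_μ δ_μ^{d_μ}` (real exponents). -/
def dpow (δ d : Fin ν → ℝ) : ℝ := ∏ μ, δ μ ^ d μ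

/-- The multi-parameter dilation `δ t = (δ^{e_1} t_1, …, δ^{e_N} t_N)`. -/
def dilate (e : Fin N → Fin ν → ℝ) (δ : Fin ν → ℝ) (t : Euc N) : Euc N :=
  (EuclideanSpace.equiv (Fin N) ℝ).symm fun i => dpow δ (e i) * t i

/-- `ς^{(δ)}(t) = δ^{e_1+⋯+e_N} ς(δ t)`. -/
def scaled (e : Fin N → Fin ν → ℝ) (ς : Euc N → ℝ) (δ : Fin ν → ℝ) : Euc N → ℝ :=
  fun t => (∏ i, dpow δ (e i)) * ς (dilate e δ t)

/-- `2^k = (2^{k_1},…,2^{k_ν})`. -/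
def twoPow (k : Fin ν → ℕ) : Fin ν → ℝ := fun μ => 2 ^ k μ

/-- The (global) `C^m` supremum norm of a function. -/
def CmSupNorm {E F : Type*} [NormedAddCommGroup E] [NormedSpace ℝ E]
    [NormedAddCommGroup F] [NormedSpace ℝ F] (m : ℕ) (f : E → F) : ℝ :=
  ∑ j ∈ Finset.range (m + 1), ⨆ t, ‖iteratedFDeriv ℝ j f t‖

/-- The `C^m` supremum norm of a function on a set. -/
def CmSupNormOn {E F : Type*} [NormedAddCommGroup E] [NormedSpace ℝ E]
    [NormedAddCommGroup F] [NormedSpace ℝ F] (m : ℕ) (s : Set E) (f : E → F) : ℝ :=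
  ∑ j ∈ Finset.range (m + 1), ⨆ t ∈ s, ‖iteratedFDerivWithin ℝ j f s t‖

/-- The cancellation condition: the integral of `g` in the coordinates `t_i` with
`e_i^μ ≠ 0` vanishes identically as a function of the remaining coordinates. -/
def CancelCond (e : Fin N → Fin ν → ℝ) (μ : Fin ν) (g : Euc N → ℝ) : Prop :=
  ∀ t : Fin N → ℝ,
    haveI : DecidablePred fun i : Fin N => e i μ ≠ 0 := Classical.decPred _
    (∫ s : {i : Fin N // e i μ ≠ 0} → ℝ,
        g ((EuclideanSpace.equiv (Fin N) ℝ).symm fun i =>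
          if h : e i μ ≠ 0 then s ⟨i, h⟩ else t i)) = 0

/-- Kernel data for the class `𝒦(N,e,a,ν)`: a sequence `{ς_k}_{k∈ℕ^ν}` bounded in
`C_c^∞(B^N(a))` satisfying the cancellation conditions. -/
def IsKernelSeq (e : Fin N → Fin ν → ℝ) (a : ℝ) (ς : (Fin ν → ℕ) → Euc N → ℝ) : Prop :=
  (∀ k, ContDiff ℝ (⊤ : ℕ∞) (ς k)) ∧
  (∀ k, tsupport (ς k) ⊆ ball (0 : Euc N) a) ∧
  (∀ m, ∃ C : ℝ, ∀ k, CmSupNorm m (ς k) ≤ C) ∧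
  (∀ k μ, k μ ≠ 0 → CancelCond e μ (ς k))

/-- Membership in the Fréchet space `𝒦̄(N,e,a,ν)` (closed ball support). -/
def MemKbar (e : Fin N → Fin ν → ℝ) (a : ℝ) (ς : (Fin ν → ℕ) → Euc N → ℝ) : Prop :=
  (∀ k, ContDiff ℝ (⊤ : ℕ∞) (ς k)) ∧
  (∀ k, tsupport (ς k) ⊆ closedBall (0 : Euc N) a) ∧
  (∀ m, ∃ C : ℝ, ∀ k, CmSupNorm m (ς k) ≤ C) ∧
  (∀ k μ, k μ ≠ 0 → CancelCond e μ (ς k))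

/-- The seminorm `‖{ς_k}‖_m = sup_k ‖ς_k‖_{C^m}` of `𝒦̄(N,e,a,ν)`. -/
def seqSeminorm (m : ℕ) (ς : (Fin ν → ℕ) → Euc N → ℝ) : ℝ :=
  ⨆ k, CmSupNorm m (ς k)

/-- The multi-indices `k ∈ ℕ^ν` with all coordinates `≤ M`. -/
def trunc (ν M : ℕ) : Finset (Fin ν → ℕ) :=
  Finset.image (fun k : Fin ν → Fin (M + 1) => fun μ => (k μ : ℕ)) Finset.univ

/-- The partial-sum operators `f ↦ ψ(x) Σ_{|k|≤M} ∫ f(γ_t(x)) ς_k^{(2^k)}(t) dt`. -/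
def partialOp (e : Fin N → Fin ν → ℝ) (γ : Euc N → Euc n → Euc n) (ψ : Euc n → ℝ)
    (ς : (Fin ν → ℕ) → Euc N → ℝ) (M : ℕ) (f : Euc n → ℝ) : Euc n → ℝ :=
  fun x => ψ x * ∑ k ∈ trunc ν M, ∫ t : Euc N, f (γ t x) * scaled e (ς k) (twoPow k) t

/-- `T` is bounded on `L^p`: the partial-sum operators are bounded uniformly in `M`. -/
def OpBounded (p : ℝ) (e : Fin N → Fin ν → ℝ) (γ : Euc N → Euc n → Euc n)
    (ψ : Euc n → ℝ) (ς : (Fin ν → ℕ) → Euc N → ℝ) : Prop :=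
  ∃ C : ℝ≥0, ∀ M : ℕ, ∀ f : Euc n → ℝ, ContDiff ℝ (⊤ : ℕ∞) f → HasCompactSupport f →
    eLpNorm (partialOp e γ ψ ς M f) (ENNReal.ofReal p) volume ≤
      C * eLpNorm f (ENNReal.ofReal p) volume

/-- All operators with small `ψ` and small kernels in `𝒦(N,e,a,ν)` are `L^p` bounded. -/
def AllOpsBounded (p : ℝ) (e : Fin N → Fin ν → ℝ) (γ : Euc N → Euc n → Euc n) : Prop :=
  ∃ ε a : ℝ, 0 < ε ∧ 0 < a ∧
    ∀ ψ : Euc n → ℝ, ContDiff ℝ (⊤ : ℕ∞) ψ → HasCompactSupport ψ →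
      tsupport ψ ⊆ ball (0 : Euc n) ε →
      ∀ ς : (Fin ν → ℕ) → Euc N → ℝ, IsKernelSeq e a ς → OpBounded p e γ ψ ς

/-! ### Vector fields, brackets, Carnot–Carathéodory geometry -/

/-- The Lie bracket of two vector fields. -/
def lieBracket (X Y : VF n) : VF n := fun x => fderiv ℝ Y x (X x) - fderiv ℝ X x (Y x)

/-- `ℒ(S)`: the smallest set of (vector field, degree) pairs containing `S` and
closed under Lie brackets (adding degrees). -/
inductive LieGen (S : Set (VF n × Deg ν)) : VF n × Deg ν → Prop
  | base {P : VF n × Deg ν} : P ∈ S → LieGen S P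
  | bracket {X Y : VF n} {d d' : Deg ν} : LieGen S (X, d) → LieGen S (Y, d') →
      LieGen S (lieBracket X Y, d + d')

def lieSpan (S : Set (VF n × Deg ν)) : Set (VF n × Deg ν) := {P | LieGen S P}

def unitCube (ν : ℕ) : Set (Fin ν → ℝ) := {δ | ∀ μ, 0 ≤ δ μ ∧ δ μ ≤ 1}

def vecConst (ν : ℕ) (ξ : ℝ) : Fin ν → ℝ := fun _ => ξ

/-- `a` is a measurable control with `‖Σ_l |a_l|²‖_{L^∞[0,1]} < 1`. -/
def IsSubunit {ι : Type*} [Fintype ι] (a : ℝ → ι → ℝ) : Prop :=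
  (∀ l, Measurable fun s => a s l) ∧
  ∃ c : ℝ, c < 1 ∧ ∀ᵐ s ∂(volume.restrict (Set.Icc (0 : ℝ) 1)), ∑ l, a s l ^ 2 ≤ c

/-- `g` is an absolutely continuous solution of `g' = Σ_l a_l δ^{d_l} X_l(g)`, `g(0)=x`,
in integral form. -/
def SolvesODE {ι : Type*} [Fintype ι] (X : ι → VF n) (d : ι → Deg ν) (δ : Fin ν → ℝ)
    (a : ℝ → ι → ℝ) (x : Euc n) (g : ℝ → Euc n) : Prop :=
  g 0 = x ∧ ∀ u ∈ Set.Icc (0 : ℝ) 1,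
    g u = x + ∫ s in (0 : ℝ)..u, ∑ l, a s l • dpow δ (d l) • X l (g s)

/-- The multi-parameter Carnot–Carathéodory ball `B_{(X,d)}(x,δ)` inside `Ω`. -/
def CCBall {ι : Type*} [Fintype ι] (X : ι → VF n) (d : ι → Deg ν) (Ω : Set (Euc n))
    (x : Euc n) (δ : Fin ν → ℝ) : Set (Euc n) :=
  {y | ∃ (g : ℝ → Euc n) (a : ℝ → ι → ℝ), IsSubunit a ∧
      (∀ u ∈ Set.Icc (0 : ℝ) 1, g u ∈ Ω) ∧ SolvesODE X d δ a x g ∧ g 1 = y}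

/-- `(X,d)` satisfies `𝒞(x,δ,Ω)`. -/
def SatC {ι : Type*} [Fintype ι] (X : ι → VF n) (d : ι → Deg ν) (x : Euc n)
    (δ : Fin ν → ℝ) (Ω : Set (Euc n)) : Prop :=
  ∀ a : ℝ → ι → ℝ, IsSubunit a →
    ∃ g : ℝ → Euc n, (∀ u ∈ Set.Icc (0 : ℝ) 1, g u ∈ Ω) ∧ SolvesODE X d δ a x g

/-- The derivation of a scalar function along a vector field. -/
def derivAlong (Y : VF n) (f : Euc n → ℝ) : Euc n → ℝ := fun x => fderiv ℝ f x (Y x)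

/-- `(δX)^α f`: iterated derivations indexed by the ordered multi-index `α`. -/
def derivList {ι : Type*} (X : ι → VF n) (w : ι → ℝ) (α : List ι) (f : Euc n → ℝ) :
    Euc n → ℝ :=
  α.foldr (fun l g => derivAlong (fun x => w l • X l x) g) f

/-- `(X,d)` controls `(X₀,d₀)` on `U` with parameter `ξ₁` (ambient `Ω`). -/
def ControlsOn {ι : Type*} [Fintype ι] (X : ι → VF n) (d : ι → Deg ν)
    (Ω U : Set (Euc n)) (ξ₁ : ℝ) (X₀ : VF n) (d₀ : Deg ν) : Prop :=
  (∀ x ∈ U, SatC X d x (vecConst ν ξ₁) Ω) ∧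
  ∃ c : Euc n → (Fin ν → ℝ) → ι → Euc n → ℝ,
    (∀ x ∈ U, ∀ δ ∈ unitCube ν, ∀ y ∈ CCBall X d Ω x (fun μ => ξ₁ * δ μ),
      dpow δ d₀ • X₀ y = ∑ l, c x δ l y • dpow δ (d l) • X l y) ∧
    (∀ x ∈ U, ∀ δ ∈ unitCube ν, ∀ l, ∀ α : List ι,
      ContinuousOn (derivList X (fun l' => dpow δ (d l')) α (c x δ l))
        (CCBall X d Ω x (fun μ => ξ₁ * δ μ))) ∧
    (∀ m : ℕ, ∃ C : ℝ, ∀ x ∈ U, ∀ δ ∈ unitCube ν, ∀ l, ∀ α : List ι, α.length ≤ m →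
      ∀ y ∈ CCBall X d Ω x (fun μ => ξ₁ * δ μ),
        |derivList X (fun l' => dpow δ (d l')) α (c x δ l) y| ≤ C)

/-- `(X,d)` controls `(X₀,d₀)` (some `U`, `ξ₁`), ambient `Ω`. -/
def ControlsPair {ι : Type*} [Fintype ι] (X : ι → VF n) (d : ι → Deg ν)
    (Ω : Set (Euc n)) (X₀ : VF n) (d₀ : Deg ν) : Prop :=
  ∃ (U : Set (Euc n)) (ξ₁ : ℝ), IsOpen U ∧ (0 : Euc n) ∈ U ∧ U ⊆ Ω ∧ 0 < ξ₁ ∧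
    ControlsOn X d Ω U ξ₁ X₀ d₀

/-- A finite set of pairs controls a pair (ambient neighborhood existentially quantified). -/
def FinsetControls (F : Finset (VF n × Deg ν)) (P : VF n × Deg ν) : Prop :=
  ∃ Ω : Set (Euc n), IsOpen Ω ∧ (0 : Euc n) ∈ Ω ∧
    ControlsPair (fun l : F => (l : VF n × Deg ν).1) (fun l : F => (l : VF n × Deg ν).2)
      Ω P.1 P.2

/-- A set `S` of pairs controls a set `T`. -/
def SetControls (S T : Set (VF n × Deg ν)) : Prop :=
  ∃ F : Finset (VF n × Deg ν), ↑F ⊆ S ∧ ∀ P ∈ S ∪ T, FinsetControls F P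

/-! ### Degrees, Taylor coefficients, exponential coefficients -/

def degMulti (e : Fin N → Fin ν → ℝ) (α : Fin N → ℕ) : Fin ν → ℝ :=
  fun μ => ∑ i, (α i : ℝ) * e i μ

/-- A degree is pure if it has exactly one nonzero coordinate. -/
def IsPureDeg (dg : Fin ν → ℝ) : Prop := ∃! μ, dg μ ≠ 0

/-- `t^α`. -/
def monomial (α : Fin N → ℕ) (t : Euc N) : ℝ := ∏ i, t i ^ α i

/-- The multi-indices `α` with `|α| < M`. -/
def multiIdxLt (N M : ℕ) : Finset (Fin N → ℕ) :=
  (trunc N M).filter fun α => ∑ i, α i < M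

/-- `X` is the family of Taylor coefficient vector fields of `W` at `t = 0`, on `U`. -/
def IsTaylorFieldOf (W : Euc N → Euc n → Euc n) (U : Set (Euc n))
    (X : (Fin N → ℕ) → VF n) : Prop :=
  X 0 = 0 ∧ (∀ α, ContDiffOn ℝ (⊤ : ℕ∞) (X α) U) ∧
  ∀ M : ℕ, ∃ C ε : ℝ, 0 < ε ∧ ∀ t ∈ ball (0 : Euc N) ε, ∀ x ∈ U,
    ‖W t x - ∑ α ∈ multiIdxLt N M, monomial α t • X α x‖ ≤ C * ‖t‖ ^ M

/-- `W(t,x) = (d/dε)|_{ε=1} γ_{εt}(γ_t⁻¹(x))` on `B^N(ρ) × U`. -/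
def IsWFor (γ : Euc N → Euc n → Euc n) (ρ : ℝ) (U : Set (Euc n))
    (W : Euc N → Euc n → Euc n) : Prop :=
  ∃ γinv : Euc N → Euc n → Euc n,
    (∀ t ∈ ball (0 : Euc N) ρ, ∀ x ∈ U, γ t (γinv t x) = x ∧ γinv t (γ t x) = x) ∧
    ∀ t ∈ ball (0 : Euc N) ρ, ∀ x ∈ U,
      HasDerivAt (fun ε : ℝ => γ (ε • t) (γinv t x)) (W t x) 1

/-- `y` is the time-one flow of the vector field `V` from `x`. -/
def FlowsTo (V : VF n) (x y : Euc n) : Prop :=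
  ∃ φ : ℝ → Euc n, φ 0 = x ∧ φ 1 = y ∧ ∀ s ∈ Set.Icc (0 : ℝ) 1, HasDerivAt φ (V (φ s)) s

/-- `Xh` is the family of exponential coefficient vector fields of `γ`:
`γ_t(x) = e^{Σ_{0<|α|<M} t^α X̂_α} x + O(|t|^M)` for every `M`. -/
def IsExpFieldsFor (γ : Euc N → Euc n → Euc n) (U : Set (Euc n))
    (Xh : (Fin N → ℕ) → VF n) : Prop :=
  Xh 0 = 0 ∧ (∀ α, ContDiffOn ℝ (⊤ : ℕ∞) (Xh α) U) ∧
  ∀ M : ℕ, ∃ C ε : ℝ, 0 < ε ∧ ∀ t ∈ ball (0 : Euc N) ε, ∀ x ∈ U,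
    ∃ y : Euc n, FlowsTo (fun z => ∑ α ∈ multiIdxLt N M, monomial α t • Xh α z) x y ∧
      ‖γ t x - y‖ ≤ C * ‖t‖ ^ M

/-- The pure power set `𝒫` of a family of coefficient fields. -/
def pureSet (e : Fin N → Fin ν → ℝ) (X : (Fin N → ℕ) → VF n) : Set (VF n × Deg ν) :=
  {P | ∃ α : Fin N → ℕ, α ≠ 0 ∧ IsPureDeg (degMulti e α) ∧ P = (X α, degMulti e α)}

/-- The nonpure power set `𝒩` of a family of coefficient fields. -/
def nonpureSet (e : Fin N → Fin ν → ℝ) (X : (Fin N → ℕ) → VF n) : Set (VF n × Deg ν) :=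
  {P | ∃ α : Fin N → ℕ, α ≠ 0 ∧ ¬ IsPureDeg (degMulti e α) ∧ P = (X α, degMulti e α)}

/-! ### Strong control -/

/-- `(X,d)` strongly controls `(X₀,d₀)`. -/
def StrongControlsOn {ι : Type*} [Fintype ι] (X : ι → VF n) (d : ι → Deg ν)
    (X₀ : VF n) (d₀ : Deg ν) : Prop :=
  ∃ (U V : Set (Euc n)) (c : ι → Euc n → ℝ),
    IsOpen U ∧ (0 : Euc n) ∈ U ∧ IsOpen V ∧ closure U ⊆ V ∧
    (∀ l, ContDiffOn ℝ (⊤ : ℕ∞) (c l) V) ∧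
    (∀ l, ¬ (∀ μ, d l μ ≤ d₀ μ) → c l = 0) ∧
    (∀ x ∈ U, X₀ x = ∑ l, c l x • X l x)

/-- A finite set of pairs strongly controls a pair. -/
def FinsetStrongControls (F : Finset (VF n × Deg ν)) (P : VF n × Deg ν) : Prop :=
  StrongControlsOn (fun l : F => (l : VF n × Deg ν).1) (fun l : F => (l : VF n × Deg ν).2)
    P.1 P.2

/-- `(X,d)` strongly controls `W(t,x)`. -/
def StrongControlsW {ι : Type*} [Fintype ι] (X : ι → VF n) (d : ι → Deg ν)
    (e : Fin N → Fin ν → ℝ) (W : Euc N → Euc n → Euc n) : Prop :=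
  ∃ (ρ' : ℝ) (U : Set (Euc n)) (V : Set (Euc N × Euc n)) (A : Finset (Fin N → ℕ))
    (c : ι → (Fin N → ℕ) → Euc N → Euc n → ℝ),
    0 < ρ' ∧ IsOpen U ∧ (0 : Euc n) ∈ U ∧ IsOpen V ∧
    closure (ball (0 : Euc N) ρ' ×ˢ U) ⊆ V ∧
    (∀ l α, ContDiffOn ℝ (⊤ : ℕ∞) (fun p : Euc N × Euc n => c l α p.1 p.2) V) ∧
    (∀ l α, degMulti e α ≠ d l → c l α = 0) ∧
    (∀ t ∈ ball (0 : Euc N) ρ', ∀ x ∈ U,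
      W t x = ∑ l, ∑ α ∈ A, (c l α t x * monomial α t) • X l x)

/-- A finite set of pairs strongly controls `W`. -/
def FinsetStrongControlsW (F : Finset (VF n × Deg ν)) (e : Fin N → Fin ν → ℝ)
    (W : Euc N → Euc n → Euc n) : Prop :=
  StrongControlsW (fun l : F => (l : VF n × Deg ν).1) (fun l : F => (l : VF n × Deg ν).2)
    e W

/-! ### Control of `W` -/

/-- `∂_{t_i}` applied to a function of `(t,u)`. -/
def derivTAlong (i : Fin N) (f : Euc N → Euc n → ℝ) : Euc N → Euc n → ℝ :=
  fun t u => fderiv ℝ (fun s => f s u) t (EuclideanSpace.single i (1 : ℝ))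

/-- Iterated `t`-partials indexed by an ordered multi-index. -/
def derivTList (β : List (Fin N)) (f : Euc N → Euc n → ℝ) : Euc N → Euc n → ℝ :=
  β.foldr derivTAlong f

/-- Iterated `u`-derivations along scaled vector fields. -/
def derivUList {ι : Type*} (X : ι → VF n) (w : ι → ℝ) (β : List ι)
    (f : Euc N → Euc n → ℝ) : Euc N → Euc n → ℝ :=
  fun t => derivList X w β (f t)

/-- `(X,d)` controls `W` on `U` for `t ∈ B^N(ρ')` with parameter `ξ₁` (ambient `Ω`). -/
def ControlsWOn {ι : Type*} [Fintype ι] (X : ι → VF n) (d : ι → Deg ν)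
    (e : Fin N → Fin ν → ℝ) (Ω U : Set (Euc n)) (ρ' ξ₁ : ℝ)
    (W : Euc N → Euc n → Euc n) : Prop :=
  (∀ x ∈ U, SatC X d x (vecConst ν ξ₁) Ω) ∧
  ∃ c : Euc n → (Fin ν → ℝ) → ι → Euc N → Euc n → ℝ,
    (∀ x ∈ U, ∀ δ ∈ unitCube ν, ∀ t ∈ ball (0 : Euc N) ρ',
      ∀ u ∈ CCBall X d Ω x (fun μ => ξ₁ * δ μ),
        W (dilate e δ t) u = ∑ l, c x δ l t u • dpow δ (d l) • X l u) ∧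
    (∀ x ∈ U, ∀ δ ∈ unitCube ν, ∀ l, ∀ β' : List (Fin N), ∀ β : List ι,
      ContinuousOn
        (fun p : Euc N × Euc n =>
          derivTList β' (derivUList X (fun l' => dpow δ (d l')) β (c x δ l)) p.1 p.2)
        (ball (0 : Euc N) ρ' ×ˢ CCBall X d Ω x (fun μ => ξ₁ * δ μ))) ∧
    (∀ m : ℕ, ∃ C : ℝ, ∀ x ∈ U, ∀ δ ∈ unitCube ν, ∀ l, ∀ β' : List (Fin N), ∀ β : List ι,
      β'.length + β.length ≤ m → ∀ t ∈ ball (0 : Euc N) ρ',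
        ∀ u ∈ CCBall X d Ω x (fun μ => ξ₁ * δ μ),
          |derivTList β' (derivUList X (fun l' => dpow δ (d l')) β (c x δ l)) t u| ≤ C)

/-- `(X,d)` controls `W` (some `ρ' ≤ ρ`, `ξ₁`, `U`), ambient `Ω`. -/
def ControlsW {ι : Type*} [Fintype ι] (X : ι → VF n) (d : ι → Deg ν)
    (e : Fin N → Fin ν → ℝ) (Ω : Set (Euc n)) (ρ : ℝ)
    (W : Euc N → Euc n → Euc n) : Prop :=
  ∃ (ρ' ξ₁ : ℝ) (U : Set (Euc n)), 0 < ρ' ∧ ρ' ≤ ρ ∧ 0 < ξ₁ ∧ IsOpen U ∧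
    (0 : Euc n) ∈ U ∧ U ⊆ Ω ∧ ControlsWOn X d e Ω U ρ' ξ₁ W

end Zhang

open Zhang Filter

/-- The ring `𝒜_n` of germs at `0 ∈ ℝ^n` of real analytic real-valued functions, as a
subring of the ring of germs at `0` of functions. -/
def analyticGermSubring (n : ℕ) : Subring ((nhds (0 : Euc n)).Germ ℝ) where
  carrier := {g | ∃ f : Euc n → ℝ, AnalyticAt ℝ f 0 ∧ g = ↑f}
  mul_mem' := by
    rintro g h ⟨f, hf, rfl⟩ ⟨f', hf', rfl⟩
    exact ⟨f * f', hf.mul hf', (Germ.coe_mul f f').symm⟩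
  one_mem' := ⟨fun _ => 1, analyticAt_const, rfl⟩
  add_mem' := by
    rintro g h ⟨f, hf, rfl⟩ ⟨f', hf', rfl⟩
    exact ⟨f + f', hf.add hf', (Germ.coe_add f f').symm⟩
  zero_mem' := ⟨fun _ => 0, analyticAt_const, rfl⟩
  neg_mem' := by
    rintro g ⟨f, hf, rfl⟩
    exact ⟨-f, hf.neg, (Germ.coe_neg f).symm⟩

/-- The `𝒜_n`-module `𝒜_n^m` of germs at `0 ∈ ℝ^n` of real analytic maps into `ℝ^m`, as a
submodule (over the subring `𝒜_n`) of the module of germs at `0` of maps into `ℝ^m`. -/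
def analyticGermSubmodule (n m : ℕ) :
    Submodule (analyticGermSubring n) ((nhds (0 : Euc n)).Germ (Euc m)) where
  carrier := {g | ∃ f : Euc n → Euc m, AnalyticAt ℝ f 0 ∧ g = ↑f}
  add_mem' := by
    rintro g h ⟨f, hf, rfl⟩ ⟨f', hf', rfl⟩
    exact ⟨f + f', hf.add hf', (Germ.coe_add f f').symm⟩
  zero_mem' := ⟨fun _ => 0, analyticAt_const, rfl⟩
  smul_mem' := by
    rintro r g ⟨f, hf, rfl⟩
    obtain ⟨fr, hfr, hr⟩ := r.2
    refine ⟨fun y => fr y • f y, hfr.smul hf, ?_⟩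
    show (r : (nhds (0 : Euc n)).Germ ℝ) • (↑f : (nhds (0 : Euc n)).Germ (Euc m)) = _
    rw [hr, ← Germ.coe_smul']
    rfl

/-!
Let `𝒪` be the ring of power series whose weighted `ℓ¹`-norm `∑ |a_α| r^α` is finite for some
polyradius `r`. Choose distinct primes `pᵢ` and take `rᵢ = pᵢ⁻ˢ`: the norm becomes a Dirichlet
series `∑ |a_α| N(α)⁻ˢ`, where `N(α) = ∏ pᵢ ^ αᵢ` separates the exponents, and for large `s` it is
dominated by its term with least `N(α)`. So with respect to a single norm any finite family of
nonzero series, normalised to have leading coefficient `1`, is a small perturbation of its leading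
monomials; division by these monomials then perturbs, through a Neumann series, to a division with
remainder by the family. By Dickson's lemma the leading monomials of the elements of an
ideal are all divisible by one of finitely many of them; after division by the corresponding
elements a remainder lying in the ideal must vanish, so the ideal is finitely generated.

The germs of analytic functions are a quotient of `𝒪`: the Taylor expansion of an analytic function
is a priori a series of multilinear maps, that is, a power series in noncommuting variables, and
letting the variables commute yields an element of `𝒪` with the same sum. The germs of analytic maps
into a finite-dimensional space form a finite module, generated by the germs of constant maps.
-/

section MultiPow

variable {σ M N : Type*} [CommMonoid M] [CommMonoid N]

/-- The monomial `∏ i, x i ^ α i` with exponent `α`, evaluated at the point `x`. -/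
def multiPow (x : σ → M) (α : σ →₀ ℕ) : M :=
  α.prod fun i k => x i ^ k

lemma multiPow_zero (x : σ → M) : multiPow x 0 = 1 :=
  Finsupp.prod_zero_index

lemma multiPow_add (x : σ → M) (α β : σ →₀ ℕ) :
    multiPow x (α + β) = multiPow x α * multiPow x β := by
  classical
  exact Finsupp.prod_add_index' (fun i => pow_zero (x i)) fun i => pow_add (x i)

lemma multiPow_single_one (x : σ → M) (i : σ) : multiPow x (Finsupp.single i 1) = x i := by
  simp [multiPow]

lemma multiPow_sum {ι : Type*} (x : σ → M) (s : Finset ι) (α : ι → σ →₀ ℕ) :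
    multiPow x (∑ j ∈ s, α j) = ∏ j ∈ s, multiPow x (α j) := by
  classical
  exact (Finsupp.prod_finsetSum_index (fun i => pow_zero (x i)) fun i => pow_add (x i)).symm

lemma multiPow_const (ρ : M) (α : σ →₀ ℕ) : multiPow (fun _ => ρ) α = ρ ^ α.degree :=
  Finset.prod_pow_eq_pow_sum _ _ _

lemma map_multiPow (φ : M →* N) (x : σ → M) (α : σ →₀ ℕ) :
    φ (multiPow x α) = multiPow (fun i => φ (x i)) α := by
  simp [multiPow, Finsupp.prod]

lemma multiPow_pow (x : σ → M) (s : ℕ) (α : σ →₀ ℕ) :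
    multiPow (fun i => x i ^ s) α = multiPow x α ^ s :=
  (map_multiPow (powMonoidHom s) x α).symm

lemma multiPow_le_multiPow {r t : σ → ℝ≥0} (h : r ≤ t) (α : σ →₀ ℕ) :
    multiPow r α ≤ multiPow t α :=
  Finset.prod_le_prod' fun i _ => pow_le_pow_left' (h i) _

lemma multiPow_pos {r : σ → ℝ≥0} (h : ∀ i, 0 < r i) (α : σ →₀ ℕ) : 0 < multiPow r α :=
  Finset.prod_pos fun i _ => pow_pos (h i) _

end MultiPow

section WeightedNorm

variable {σ 𝕜 : Type*} [NormedField 𝕜]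

/-- The weighted `ℓ¹`-norm of a power series with respect to the polyradius `r`. -/
def weightedNorm (r : σ → ℝ≥0) (a : MvPowerSeries σ 𝕜) : ℝ≥0∞ :=
  ∑' α, ‖MvPowerSeries.coeff α a‖ₑ * (multiPow r α : ℝ≥0)

variable {r : σ → ℝ≥0}

lemma weightedNorm_mono {t : σ → ℝ≥0} (h : r ≤ t) (a : MvPowerSeries σ 𝕜) :
    weightedNorm r a ≤ weightedNorm t a :=
  ENNReal.tsum_le_tsum fun α => by gcongr; exact multiPow_le_multiPow h α

lemma weightedNorm_zero : weightedNorm r (0 : MvPowerSeries σ 𝕜) = 0 := by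
  simp [weightedNorm]

lemma weightedNorm_neg (a : MvPowerSeries σ 𝕜) : weightedNorm r (-a) = weightedNorm r a := by
  simp [weightedNorm]

lemma weightedNorm_add_le (a b : MvPowerSeries σ 𝕜) :
    weightedNorm r (a + b) ≤ weightedNorm r a + weightedNorm r b := by
  simp_rw [weightedNorm, ← ENNReal.tsum_add, ← add_mul, map_add]
  exact ENNReal.tsum_le_tsum fun α => by gcongr; exact enorm_add_le _ _

lemma weightedNorm_sub_le (a b : MvPowerSeries σ 𝕜) :
    weightedNorm r (a - b) ≤ weightedNorm r a + weightedNorm r b := by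
  simpa only [sub_eq_add_neg, weightedNorm_neg] using weightedNorm_add_le a (-b)

lemma weightedNorm_sum_le {ι : Type*} (s : Finset ι) (a : ι → MvPowerSeries σ 𝕜) :
    weightedNorm r (∑ i ∈ s, a i) ≤ ∑ i ∈ s, weightedNorm r (a i) :=
  Finset.le_sum_of_subadditive _ weightedNorm_zero.le weightedNorm_add_le _ _

lemma weightedNorm_monomial (α : σ →₀ ℕ) (c : 𝕜) :
    weightedNorm r (MvPowerSeries.monomial α c) = ‖c‖ₑ * (multiPow r α : ℝ≥0) := by
  classical
  rw [weightedNorm, tsum_eq_single α, MvPowerSeries.coeff_monomial_same]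
  intro β hβ
  simp [MvPowerSeries.coeff_monomial_ne hβ]

lemma weightedNorm_monomial_ne_top (α : σ →₀ ℕ) (c : 𝕜) :
    weightedNorm r (MvPowerSeries.monomial α c) ≠ ⊤ := by
  rw [weightedNorm_monomial]
  exact ENNReal.mul_ne_top enorm_ne_top ENNReal.coe_ne_top

lemma ennreal_tsum_mul_tsum_eq_tsum_sum_antidiagonal {A : Type*} [AddMonoid A]
    [Finset.HasAntidiagonal A] (u v : A → ℝ≥0∞) :
    (∑' α, u α) * ∑' β, v β =
      ∑' γ, ∑ p ∈ Finset.HasAntidiagonal.antidiagonal γ, u p.1 * v p.2 := by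
  simp_rw [← ENNReal.tsum_mul_right, ← ENNReal.tsum_mul_left]
  rw [← ENNReal.tsum_prod, ← Finset.HasAntidiagonal.sigmaAntidiagonalEquivProd.tsum_eq,
    ENNReal.tsum_sigma']
  refine tsum_congr fun γ => ?_
  rw [tsum_fintype]
  exact Finset.sum_coe_sort (Finset.HasAntidiagonal.antidiagonal γ) fun p => u p.1 * v p.2

lemma weightedNorm_mul_le (a b : MvPowerSeries σ 𝕜) :
    weightedNorm r (a * b) ≤ weightedNorm r a * weightedNorm r b := by
  classical
  simp_rw [weightedNorm]
  rw [ennreal_tsum_mul_tsum_eq_tsum_sum_antidiagonal]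
  refine ENNReal.tsum_le_tsum fun γ => ?_
  rw [MvPowerSeries.coeff_mul]
  refine (mul_le_mul_left (enorm_sum_le _ _) _).trans ?_
  rw [Finset.sum_mul]
  refine Finset.sum_le_sum fun p hp => ?_
  rw [← Finset.HasAntidiagonal.mem_antidiagonal.1 hp, multiPow_add, enorm_mul, ENNReal.coe_mul,
    mul_mul_mul_comm]

lemma eq_zero_of_weightedNorm_eq_zero (hr : ∀ i, 0 < r i) {a : MvPowerSeries σ 𝕜}
    (h : weightedNorm r a = 0) : a = 0 := by
  ext α
  simpa [(multiPow_pos hr α).ne'] using ENNReal.tsum_eq_zero.1 h α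

lemma summable_coeff_of_tsum_weightedNorm_ne_top [CompleteSpace 𝕜] (hr : ∀ i, 0 < r i)
    {u : ℕ → MvPowerSeries σ 𝕜} (hu : ∑' m, weightedNorm r (u m) ≠ ⊤) (α : σ →₀ ℕ) :
    Summable fun m => MvPowerSeries.coeff α (u m) := by
  refine Summable.of_enorm fun htop => hu (top_le_iff.1 ?_)
  calc ⊤ = (∑' m, ‖MvPowerSeries.coeff α (u m)‖ₑ) * (multiPow r α : ℝ≥0) := by
        rw [htop, ENNReal.top_mul (by simpa using (multiPow_pos hr α).ne')]
    _ = ∑' m, ‖MvPowerSeries.coeff α (u m)‖ₑ * (multiPow r α : ℝ≥0) := ENNReal.tsum_mul_right.symm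
    _ ≤ ∑' m, weightedNorm r (u m) := ENNReal.tsum_le_tsum fun m => ENNReal.le_tsum α

lemma exists_weightedNorm_sub_sum_range_le_tsum [CompleteSpace 𝕜] (hr : ∀ i, 0 < r i)
    {u : ℕ → MvPowerSeries σ 𝕜} (hu : ∑' m, weightedNorm r (u m) ≠ ⊤) :
    ∃ a : MvPowerSeries σ 𝕜, ∀ n,
      weightedNorm r (a - ∑ m ∈ Finset.range n, u m) ≤ ∑' m, weightedNorm r (u (m + n)) := by
  let a : MvPowerSeries σ 𝕜 := fun α => ∑' m, MvPowerSeries.coeff α (u m)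
  have coeff_a (α) : MvPowerSeries.coeff α a = ∑' m, MvPowerSeries.coeff α (u m) := rfl
  refine ⟨a, fun n => ?_⟩
  simp_rw [weightedNorm]
  rw [ENNReal.tsum_comm]
  refine ENNReal.tsum_le_tsum fun α => ?_
  rw [ENNReal.tsum_mul_right, map_sub, coeff_a, map_sum,
    ← (summable_coeff_of_tsum_weightedNorm_ne_top hr hu α).sum_add_tsum_nat_add n,
    add_sub_cancel_left]
  gcongr
  exact enorm_tsum_le_tsum_enorm

lemma weightedNorm_iterate_le {D : MvPowerSeries σ 𝕜 → MvPowerSeries σ 𝕜} {c : ℝ≥0∞}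
    (hD : ∀ h, weightedNorm r (D h) ≤ c * weightedNorm r h) (g : MvPowerSeries σ 𝕜) (m : ℕ) :
    weightedNorm r (D^[m] g) ≤ c ^ m * weightedNorm r g := by
  induction m with
  | zero => simp
  | succ m ih =>
    rw [Function.iterate_succ_apply', pow_succ', mul_assoc]
    exact (hD _).trans (by gcongr)

lemma tsum_weightedNorm_iterate_ne_top {D : MvPowerSeries σ 𝕜 → MvPowerSeries σ 𝕜} {c : ℝ≥0∞}
    (hc : c < 1) (hD : ∀ h, weightedNorm r (D h) ≤ c * weightedNorm r h) {g : MvPowerSeries σ 𝕜}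
    (hg : weightedNorm r g ≠ ⊤) : ∑' m, weightedNorm r (D^[m] g) ≠ ⊤ := by
  refine ne_top_of_le_ne_top ?_ (ENNReal.tsum_le_tsum (weightedNorm_iterate_le hD g))
  rw [ENNReal.tsum_mul_right, ENNReal.tsum_geometric]
  exact ENNReal.mul_ne_top (ENNReal.inv_ne_top.2 (tsub_pos_of_lt hc).ne') hg

/-- The solution is the Neumann series `∑ D^[m] g`. -/
lemma exists_sub_apply_eq_of_contracting [CompleteSpace 𝕜] (hr : ∀ i, 0 < r i)
    (D : MvPowerSeries σ 𝕜 →+ MvPowerSeries σ 𝕜) {c : ℝ≥0∞} (hc : c < 1)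
    (hD : ∀ h, weightedNorm r (D h) ≤ c * weightedNorm r h) {g : MvPowerSeries σ 𝕜}
    (hg : weightedNorm r g ≠ ⊤) : ∃ h, weightedNorm r h ≠ ⊤ ∧ h - D h = g := by
  have hfin := tsum_weightedNorm_iterate_ne_top hc hD hg
  obtain ⟨h, hh⟩ := exists_weightedNorm_sub_sum_range_le_tsum hr hfin
  let F (n : ℕ) : MvPowerSeries σ 𝕜 := ∑ m ∈ Finset.range n, D^[m] g
  let tail (n : ℕ) : ℝ≥0∞ := ∑' m, weightedNorm r (D^[m + n] g)
  have F_succ (n : ℕ) : F (n + 1) = D (F n) + g := by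
    simp only [F, Finset.sum_range_succ', map_sum, Function.iterate_succ_apply',
      Function.iterate_zero_apply]
  have hbound (n : ℕ) : weightedNorm r (h - D h - g) ≤ tail (n + 1) + c * tail n :=
    calc weightedNorm r (h - D h - g)
        = weightedNorm r ((h - F (n + 1)) - D (h - F n)) := by
          rw [F_succ, map_sub]; congr 1; abel
      _ ≤ weightedNorm r (h - F (n + 1)) + weightedNorm r (D (h - F n)) := weightedNorm_sub_le _ _
      _ ≤ tail (n + 1) + c * tail n := by
          gcongr
          exacts [hh _, (hD _).trans (by gcongr; exact hh n)]
  have htail : Tendsto tail atTop (𝓝 0) := ENNReal.tendsto_sum_nat_add _ hfin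
  have hlim : Tendsto (fun n => tail (n + 1) + c * tail n) atTop (𝓝 0) := by
    simpa using ((tendsto_add_atTop_iff_nat 1).2 htail).add
      (ENNReal.Tendsto.const_mul htail (Or.inr hc.ne_top))
  refine ⟨h, ne_top_of_le_ne_top hfin (by simpa using hh 0), sub_eq_zero.1 ?_⟩
  exact eq_zero_of_weightedNorm_eq_zero hr (le_antisymm (ge_of_tendsto' hlim hbound) zero_le)

end WeightedNorm

section Division

variable {σ 𝕜 : Type*} [NormedField 𝕜] {r : σ → ℝ≥0}

/-- The part of a power series supported on the set `S` of exponents. -/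
def restrictSupport (S : Set (σ →₀ ℕ)) : MvPowerSeries σ 𝕜 →+ MvPowerSeries σ 𝕜 where
  toFun a := S.indicator fun α => MvPowerSeries.coeff α a
  map_zero' := Set.indicator_zero _ S
  map_add' a b := Set.indicator_add S a b

lemma coeff_restrictSupport (S : Set (σ →₀ ℕ)) (a : MvPowerSeries σ 𝕜) (α : σ →₀ ℕ) :
    MvPowerSeries.coeff α (restrictSupport S a) =
      S.indicator (fun β => MvPowerSeries.coeff β a) α :=
  rfl

lemma sum_restrictSupport_fiber {κ : Type*} [Fintype κ] (d : (σ →₀ ℕ) → κ)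
    (a : MvPowerSeries σ 𝕜) : ∑ k, restrictSupport (d ⁻¹' {k}) a = a := by
  classical
  ext α
  simp [coeff_restrictSupport, Set.indicator_apply]

lemma sum_weightedNorm_restrictSupport_fiber {κ : Type*} [Fintype κ] (d : (σ →₀ ℕ) → κ)
    (a : MvPowerSeries σ 𝕜) :
    ∑ k, weightedNorm r (restrictSupport (d ⁻¹' {k}) a) = weightedNorm r a := by
  classical
  simp_rw [weightedNorm]
  rw [← Summable.tsum_finsetSum fun _ _ => ENNReal.summable]
  refine tsum_congr fun α => ?_
  rw [← Finset.sum_mul]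
  simp [coeff_restrictSupport, Set.indicator_apply, apply_ite]

/-- The quotient of a power series by the monomial of exponent `b`, discarding the terms that are
not divisible by it. -/
def divMonomial (b : σ →₀ ℕ) : MvPowerSeries σ 𝕜 →+ MvPowerSeries σ 𝕜 where
  toFun a := fun γ => MvPowerSeries.coeff (γ + b) a
  map_zero' := rfl
  map_add' _ _ := rfl

lemma coeff_divMonomial (b γ : σ →₀ ℕ) (a : MvPowerSeries σ 𝕜) :
    MvPowerSeries.coeff γ (divMonomial b a) = MvPowerSeries.coeff (γ + b) a :=
  rfl

lemma divMonomial_mul_monomial {b : σ →₀ ℕ} {a : MvPowerSeries σ 𝕜}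
    (h : ∀ α, MvPowerSeries.coeff α a ≠ 0 → b ≤ α) :
    divMonomial b a * MvPowerSeries.monomial b 1 = a := by
  classical
  ext α
  rw [MvPowerSeries.coeff_mul_monomial, coeff_divMonomial, mul_one]
  split_ifs with hb
  · rw [tsub_add_cancel_of_le hb]
  · exact (not_not.1 (mt (h α) hb)).symm

lemma weightedNorm_divMonomial_mul_le (b : σ →₀ ℕ) (a : MvPowerSeries σ 𝕜) :
    weightedNorm r (divMonomial b a) * (multiPow r b : ℝ≥0) ≤ weightedNorm r a := by
  simp_rw [weightedNorm, ← ENNReal.tsum_mul_right, mul_assoc, ← ENNReal.coe_mul, ← multiPow_add,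
    coeff_divMonomial]
  exact ENNReal.tsum_comp_le_tsum_of_injective (add_left_injective b)
    fun α => ‖MvPowerSeries.coeff α a‖ₑ * (multiPow r α : ℝ≥0)

lemma weightedNorm_divMonomial_ne_top (hr : ∀ i, 0 < r i) (b : σ →₀ ℕ) {a : MvPowerSeries σ 𝕜}
    (ha : weightedNorm r a ≠ ⊤) : weightedNorm r (divMonomial b a) ≠ ⊤ := fun htop => by
  have hle := weightedNorm_divMonomial_mul_le (r := r) b a
  rw [htop, ENNReal.top_mul (by simpa using (multiPow_pos hr b).ne')] at hle
  exact ha (top_le_iff.1 hle)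

variable {ι : Type*} [Fintype ι] {a : ι → σ →₀ ℕ} {f : ι → MvPowerSeries σ 𝕜}

lemma sum_divMonomial_mul_monomial_add {d : (σ →₀ ℕ) → Option ι}
    (hd : ∀ α i, d α = some i → a i ≤ α) (h : MvPowerSeries σ 𝕜) :
    ∑ i, divMonomial (a i) (restrictSupport (d ⁻¹' {some i}) h) * MvPowerSeries.monomial (a i) 1
      + restrictSupport (d ⁻¹' {none}) h = h := by
  have hdiv (i) : divMonomial (a i) (restrictSupport (d ⁻¹' {some i}) h) *
      MvPowerSeries.monomial (a i) 1 = restrictSupport (d ⁻¹' {some i}) h :=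
    divMonomial_mul_monomial fun α hα =>
      hd α i (Set.mem_of_indicator_ne_zero (s := d ⁻¹' {some i}) hα)
  conv_rhs => rw [← sum_restrictSupport_fiber d h, Fintype.sum_option, add_comm]
  simp_rw [hdiv]

lemma weightedNorm_sum_divMonomial_mul_le {c : ℝ≥0∞}
    (hf : ∀ i, weightedNorm r (MvPowerSeries.monomial (a i) 1 - f i) ≤ c * (multiPow r (a i) : ℝ≥0))
    (d : (σ →₀ ℕ) → Option ι) (h : MvPowerSeries σ 𝕜) :
    weightedNorm r (∑ i, divMonomial (a i) (restrictSupport (d ⁻¹' {some i}) h) *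
      (MvPowerSeries.monomial (a i) 1 - f i)) ≤ c * weightedNorm r h := by
  let part (o : Option ι) := restrictSupport (d ⁻¹' {o}) h
  calc _ ≤ ∑ i, weightedNorm r (divMonomial (a i) (part (some i)) *
          (MvPowerSeries.monomial (a i) 1 - f i)) := weightedNorm_sum_le _ _
    _ ≤ ∑ i, c * weightedNorm r (part (some i)) := Finset.sum_le_sum fun i _ =>
      calc _ ≤ weightedNorm r (divMonomial (a i) (part (some i))) *
              (c * (multiPow r (a i) : ℝ≥0)) :=
            (weightedNorm_mul_le _ _).trans (by gcongr; exact hf i)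
        _ = c * (weightedNorm r (divMonomial (a i) (part (some i))) * (multiPow r (a i) : ℝ≥0)) :=
            mul_left_comm _ _ _
        _ ≤ c * weightedNorm r (part (some i)) := by
            gcongr
            exact weightedNorm_divMonomial_mul_le _ _
    _ ≤ c * weightedNorm r h := by
      rw [← Finset.mul_sum, ← sum_weightedNorm_restrictSupport_fiber d h, Fintype.sum_option]
      gcongr
      exact le_add_self

/-- Division with remainder: if every `f i` is a small perturbation of its leading monomial, the
operator sending `h` to `∑ i, q i * f i + rem`, for the quotients `q i` and the remainder `rem` of
the monomial division of `h`, is a small perturbation of the identity. -/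
theorem exists_eq_sum_mul_add_of_weightedNorm_sub_le [CompleteSpace 𝕜] (hr : ∀ i, 0 < r i)
    {c : ℝ≥0∞} (hc : c < 1)
    (hf : ∀ i, weightedNorm r (MvPowerSeries.monomial (a i) 1 - f i) ≤ c * (multiPow r (a i) : ℝ≥0))
    {g : MvPowerSeries σ 𝕜} (hg : weightedNorm r g ≠ ⊤) :
    ∃ (q : ι → MvPowerSeries σ 𝕜) (rem : MvPowerSeries σ 𝕜),
      (∀ i, weightedNorm r (q i) ≠ ⊤) ∧ weightedNorm r rem ≠ ⊤ ∧
      (∀ α i, a i ≤ α → MvPowerSeries.coeff α rem = 0) ∧ g = ∑ i, q i * f i + rem := by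
  classical
  let d (α : σ →₀ ℕ) : Option ι := if h : ∃ i, a i ≤ α then some h.choose else none
  have d_eq_some (α i) (h : d α = some i) : a i ≤ α := by
    by_cases hex : ∃ i, a i ≤ α <;> simp only [d, hex, ↓reduceDIte, Option.some.injEq] at h
    exacts [h ▸ hex.choose_spec, by simp at h]
  let D : MvPowerSeries σ 𝕜 →+ MvPowerSeries σ 𝕜 :=
    ∑ i, (AddMonoidHom.mulRight (MvPowerSeries.monomial (a i) 1 - f i)).comp
      ((divMonomial (a i)).comp (restrictSupport (d ⁻¹' {some i})))
  have D_apply (h) : D h = ∑ i, divMonomial (a i) (restrictSupport (d ⁻¹' {some i}) h) *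
      (MvPowerSeries.monomial (a i) 1 - f i) := by simp [D]
  obtain ⟨h, hh, hDh⟩ := exists_sub_apply_eq_of_contracting hr D hc
    (fun h => D_apply h ▸ weightedNorm_sum_divMonomial_mul_le hf d h) hg
  have hpart (o) : weightedNorm r (restrictSupport (d ⁻¹' {o}) h) ≠ ⊤ :=
    ne_top_of_le_ne_top hh <| (Finset.single_le_sum (fun _ _ => zero_le) (Finset.mem_univ o)).trans
      (sum_weightedNorm_restrictSupport_fiber d h).le
  refine ⟨fun i => divMonomial (a i) (restrictSupport (d ⁻¹' {some i}) h),
    restrictSupport (d ⁻¹' {none}) h, fun i => weightedNorm_divMonomial_ne_top hr _ (hpart _),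
    hpart none, fun α i hi => ?_, ?_⟩
  · have hex : ∃ i, a i ≤ α := ⟨i, hi⟩
    exact Set.indicator_of_notMem (by simp [d, hex]) _
  · rw [← hDh, D_apply]
    nth_rw 1 [← sum_divMonomial_mul_monomial_add d_eq_some h]
    simp_rw [mul_sub, Finset.sum_sub_distrib]
    abel

end Division

section Convergent

variable {σ 𝕜 : Type*} [NormedField 𝕜]

variable (σ 𝕜) in
/-- The algebra of convergent power series in the variables `σ`. -/
def convergentMvPowerSeries : Subalgebra 𝕜 (MvPowerSeries σ 𝕜) where
  carrier := {a | ∃ r : σ → ℝ≥0, (∀ i, 0 < r i) ∧ weightedNorm r a ≠ ⊤}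
  mul_mem' := by
    rintro a b ⟨r, hr, ha⟩ ⟨t, ht, hb⟩
    refine ⟨r ⊓ t, fun i => lt_min (hr i) (ht i),
      ne_top_of_le_ne_top (ENNReal.mul_ne_top ha hb) ((weightedNorm_mul_le a b).trans ?_)⟩
    gcongr
    exacts [weightedNorm_mono inf_le_left a, weightedNorm_mono inf_le_right b]
  add_mem' := by
    rintro a b ⟨r, hr, ha⟩ ⟨t, ht, hb⟩
    refine ⟨r ⊓ t, fun i => lt_min (hr i) (ht i),
      ne_top_of_le_ne_top (ENNReal.add_ne_top.2 ⟨ha, hb⟩) ((weightedNorm_add_le a b).trans ?_)⟩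
    gcongr
    exacts [weightedNorm_mono inf_le_left a, weightedNorm_mono inf_le_right b]
  algebraMap_mem' c :=
    ⟨1, fun _ => one_pos, weightedNorm_monomial_ne_top 0 c⟩

lemma monomial_mem_convergentMvPowerSeries (α : σ →₀ ℕ) (c : 𝕜) :
    MvPowerSeries.monomial α c ∈ convergentMvPowerSeries σ 𝕜 :=
  ⟨1, fun _ => one_pos, weightedNorm_monomial_ne_top α c⟩

end Convergent

section LeadingTerm

variable {σ 𝕜 : Type*}

/-- Encoding of exponents by natural numbers: the variable `i` is sent to the prime `p i`. -/
def primeCode (p : σ ↪ Nat.Primes) (α : σ →₀ ℕ) : ℕ :=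
  multiPow (fun i => (p i : ℕ)) α

lemma primeCode_pos (p : σ ↪ Nat.Primes) (α : σ →₀ ℕ) : 0 < primeCode p α :=
  Finset.prod_pos fun i _ => pow_pos (p i).2.pos _

lemma factorization_primeCode (p : σ ↪ Nat.Primes) (α : σ →₀ ℕ) (i : σ) :
    (primeCode p α).factorization (p i) = α i := by
  classical
  have hne : ∀ j ∈ α.support, (p j : ℕ) ^ α j ≠ 0 := fun j _ => pow_ne_zero _ (p j).2.ne_zero
  have hj (j) : ((p j : ℕ) ^ α j).factorization (p i) = if j = i then α j else 0 := by
    rw [(p j).2.factorization_pow, Finsupp.single_apply]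
    exact if_congr (by rw [Nat.Primes.coe_nat_inj, p.injective.eq_iff]) rfl rfl
  rw [primeCode, multiPow, Finsupp.prod, Nat.factorization_prod hne, Finsupp.finsetSum_apply]
  simp_rw [hj, Finset.sum_ite_eq', Finsupp.mem_support_iff, ite_not]
  split_ifs with h
  exacts [h.symm, rfl]

lemma primeCode_injective (p : σ ↪ Nat.Primes) : Function.Injective (primeCode p) :=
  fun α β h => Finsupp.ext fun i => by
    rw [← factorization_primeCode p α, h, factorization_primeCode]

/-- The polyradius `pᵢ⁻ˢ`, for which the weighted norm of a power series is a Dirichlet series in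
the codes of the exponents. -/
def primeRadius (p : σ ↪ Nat.Primes) (s : ℕ) (i : σ) : ℝ≥0 :=
  (p i : ℝ≥0)⁻¹ ^ s

lemma primeRadius_pos (p : σ ↪ Nat.Primes) (s : ℕ) (i : σ) : 0 < primeRadius p s i :=
  pow_pos (inv_pos.2 (by exact_mod_cast (p i).2.pos)) _

lemma multiPow_primeRadius (p : σ ↪ Nat.Primes) (s : ℕ) (α : σ →₀ ℕ) :
    multiPow (primeRadius p s) α = (primeCode p α : ℝ≥0)⁻¹ ^ s := by
  rw [primeCode, show primeRadius p s = fun i => (p i : ℝ≥0)⁻¹ ^ s from rfl, multiPow_pow]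
  congr 1
  simp [multiPow, Finsupp.prod]

lemma eventually_primeRadius_le [Finite σ] (p : σ ↪ Nat.Primes) {r : σ → ℝ≥0}
    (hr : ∀ i, 0 < r i) : ∀ᶠ s in atTop, primeRadius p s ≤ r := by
  refine eventually_all.2 fun i => ?_
  have hlt : (p i : ℝ≥0)⁻¹ < 1 := inv_lt_one_of_one_lt₀ (by exact_mod_cast (p i).2.one_lt)
  exact (NNReal.tendsto_pow_atTop_nhds_zero_of_lt_one hlt).eventually_le_const (hr i)

variable [NormedField 𝕜]

lemma eventually_weightedNorm_primeRadius_ne_top [Finite σ] (p : σ ↪ Nat.Primes)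
    {a : MvPowerSeries σ 𝕜} (ha : a ∈ convergentMvPowerSeries σ 𝕜) :
    ∀ᶠ s in atTop, weightedNorm (primeRadius p s) a ≠ ⊤ := by
  obtain ⟨r, hr, har⟩ := ha
  filter_upwards [eventually_primeRadius_le p hr] with s hs
  exact ne_top_of_le_ne_top har (weightedNorm_mono hs a)

/-- `f` is the sum of the monomial of exponent `α` and of terms of larger code. -/
def IsMonicAt (p : σ ↪ Nat.Primes) (f : MvPowerSeries σ 𝕜) (α : σ →₀ ℕ) : Prop :=
  MvPowerSeries.coeff α f = 1 ∧
    ∀ β, MvPowerSeries.coeff β f ≠ 0 → β ≠ α → primeCode p α < primeCode p β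

lemma exists_isMonicAt_smul (p : σ ↪ Nat.Primes) {f : MvPowerSeries σ 𝕜} (hf : f ≠ 0) :
    ∃ α, MvPowerSeries.coeff α f ≠ 0 ∧ IsMonicAt p ((MvPowerSeries.coeff α f)⁻¹ • f) α := by
  have hne : {α | MvPowerSeries.coeff α f ≠ 0}.Nonempty := by
    by_contra! h
    exact hf (MvPowerSeries.ext fun α => not_not.1 (Set.eq_empty_iff_forall_notMem.1 h α))
  obtain ⟨α, hα, hmin⟩ := exists_minimalFor_of_wellFoundedLT _ (primeCode p) hne
  refine ⟨α, hα, by simpa using inv_mul_cancel₀ hα, fun β hβ hβα => ?_⟩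
  have hβf : MvPowerSeries.coeff β f ≠ 0 := fun h0 => hβ (by simp [h0])
  exact lt_of_le_of_ne ((le_total _ _).elim id (hmin hβf))
    fun h => hβα (primeCode_injective p h.symm)

lemma weightedNorm_primeRadius_add_le (p : σ ↪ Nat.Primes) {a : MvPowerSeries σ 𝕜} {N : ℕ}
    (hN : 0 < N) (ha : ∀ β, MvPowerSeries.coeff β a ≠ 0 → N ≤ primeCode p β) (j s : ℕ) :
    weightedNorm (primeRadius p (j + s)) a ≤
      ((N : ℝ≥0)⁻¹ ^ j : ℝ≥0) * weightedNorm (primeRadius p s) a := by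
  rw [weightedNorm, weightedNorm, ← ENNReal.tsum_mul_left]
  refine ENNReal.tsum_le_tsum fun β => ?_
  by_cases hβ : MvPowerSeries.coeff β a = 0
  · simp [hβ]
  rw [mul_left_comm, multiPow_primeRadius, multiPow_primeRadius, ← ENNReal.coe_mul, pow_add]
  gcongr
  exact ha β hβ

lemma tendsto_weightedNorm_primeRadius_mul_primeCode_pow [Finite σ] (p : σ ↪ Nat.Primes)
    {a : MvPowerSeries σ 𝕜} (ha : a ∈ convergentMvPowerSeries σ 𝕜) {α : σ →₀ ℕ}
    (hα : ∀ β, MvPowerSeries.coeff β a ≠ 0 → primeCode p α < primeCode p β) :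
    Tendsto (fun s => weightedNorm (primeRadius p s) a * ((primeCode p α : ℝ≥0) ^ s : ℝ≥0))
      atTop (𝓝 0) := by
  obtain ⟨s, hs⟩ := (eventually_weightedNorm_primeRadius_ne_top p ha).exists
  set N := primeCode p α
  let ratio : ℝ≥0 := ((N + 1 : ℕ) : ℝ≥0)⁻¹ * N
  have hratio : ratio < 1 := by
    rw [inv_mul_lt_one₀ (by positivity)]
    exact_mod_cast Nat.lt_succ_self N
  let C : ℝ≥0∞ := weightedNorm (primeRadius p s) a * ((N : ℝ≥0) ^ s : ℝ≥0)
  have hC : C ≠ ⊤ := ENNReal.mul_ne_top hs ENNReal.coe_ne_top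
  have hlim : Tendsto (fun j => (ratio ^ j : ℝ≥0) * C) atTop (𝓝 0) := by
    simpa using ENNReal.Tendsto.mul_const (ENNReal.tendsto_coe.2
      (NNReal.tendsto_pow_atTop_nhds_zero_of_lt_one hratio)) (Or.inr hC)
  refine (tendsto_add_atTop_iff_nat s).1 <|
    tendsto_of_tendsto_of_tendsto_of_le_of_le tendsto_const_nhds hlim (fun _ => zero_le) fun j => ?_
  calc weightedNorm (primeRadius p (j + s)) a * ((N : ℝ≥0) ^ (j + s) : ℝ≥0)
      ≤ (((N + 1 : ℕ) : ℝ≥0)⁻¹ ^ j : ℝ≥0) * weightedNorm (primeRadius p s) a *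
          ((N : ℝ≥0) ^ (j + s) : ℝ≥0) := by
        gcongr
        exact weightedNorm_primeRadius_add_le p N.succ_pos hα j s
    _ = (ratio ^ j : ℝ≥0) * C := by
        simp only [ratio, C, mul_pow, pow_add, ENNReal.coe_mul]
        ring

lemma IsMonicAt.eventually_weightedNorm_monomial_sub_le [Finite σ] {p : σ ↪ Nat.Primes}
    {f : MvPowerSeries σ 𝕜} {α : σ →₀ ℕ} (hfα : IsMonicAt p f α)
    (hf : f ∈ convergentMvPowerSeries σ 𝕜) {c : ℝ≥0∞} (hc : 0 < c) :
    ∀ᶠ s in atTop, weightedNorm (primeRadius p s) (MvPowerSeries.monomial α 1 - f) ≤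
      c * (multiPow (primeRadius p s) α : ℝ≥0) := by
  classical
  have hmem := sub_mem (monomial_mem_convergentMvPowerSeries α (1 : 𝕜)) hf
  have hsupp (β) (hβ : MvPowerSeries.coeff β (MvPowerSeries.monomial α 1 - f) ≠ 0) :
      primeCode p α < primeCode p β := by
    have hne : β ≠ α := by
      rintro rfl
      simp [hfα.1] at hβ
    refine hfα.2 β (fun h0 => hβ ?_) hne
    rw [map_sub, MvPowerSeries.coeff_monomial_ne hne, h0, sub_zero]
  have hcode : (primeCode p α : ℝ≥0) ≠ 0 := by exact_mod_cast (primeCode_pos p α).ne'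
  have hlim := tendsto_weightedNorm_primeRadius_mul_primeCode_pow p hmem hsupp
  filter_upwards [hlim.eventually_le_const hc] with s hs
  rw [multiPow_primeRadius, inv_pow, ENNReal.coe_inv (pow_ne_zero s hcode), ← div_eq_mul_inv]
  exact (ENNReal.le_div_iff_mul_le (by simp [hc.ne']) (by simp)).2 hs

end LeadingTerm

section Noetherian

variable {σ 𝕜 : Type*} [Finite σ]

lemma exists_finite_minimal_elements (E : Set (σ →₀ ℕ)) :
    ∃ A ⊆ E, A.Finite ∧ ∀ α ∈ E, ∃ a ∈ A, a ≤ α :=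
  ⟨{α | Minimal (· ∈ E) α}, fun _ ha => ha.prop,
    WellQuasiOrderedLE.finite_of_isAntichain (setOfPred_minimal_antichain _), fun α hα =>
      (exists_minimal_le_of_wellFoundedLT (· ∈ E) α hα).imp fun _ ha => ha.symm⟩

variable [NormedField 𝕜] [CompleteSpace 𝕜]

lemma exists_eq_sum_mul_add_of_isMonicAt {ι : Type*} [Fintype ι] (p : σ ↪ Nat.Primes)
    {f : ι → convergentMvPowerSeries σ 𝕜} {a : ι → σ →₀ ℕ} (hf : ∀ i, IsMonicAt p (f i).1 (a i))
    (g : convergentMvPowerSeries σ 𝕜) :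
    ∃ (q : ι → convergentMvPowerSeries σ 𝕜) (rem : convergentMvPowerSeries σ 𝕜),
      (∀ α i, a i ≤ α → MvPowerSeries.coeff α rem.1 = 0) ∧ g = ∑ i, q i * f i + rem := by
  obtain ⟨s, hs, hg⟩ := ((eventually_all.2 fun i => (hf i).eventually_weightedNorm_monomial_sub_le
    (f i).2 (c := 2⁻¹) (by simp)).and (eventually_weightedNorm_primeRadius_ne_top p g.2)).exists
  obtain ⟨q, rem, hq, hrem, hcoeff, heq⟩ := exists_eq_sum_mul_add_of_weightedNorm_sub_le
    (primeRadius_pos p s) (ENNReal.inv_lt_one.2 ENNReal.one_lt_two) hs hg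
  have hmem {b : MvPowerSeries σ 𝕜} (hb : weightedNorm (primeRadius p s) b ≠ ⊤) :
      b ∈ convergentMvPowerSeries σ 𝕜 := ⟨_, primeRadius_pos p s, hb⟩
  exact ⟨fun i => ⟨q i, hmem (hq i)⟩, ⟨rem, hmem hrem⟩, hcoeff, Subtype.ext (by simpa using heq)⟩

instance isNoetherianRing_convergentMvPowerSeries :
    IsNoetherianRing (convergentMvPowerSeries σ 𝕜) := by
  refine ⟨fun I => ?_⟩
  let p : σ ↪ Nat.Primes :=
    ((Finite.equivFin σ).toEmbedding.trans Fin.valEmbedding).trans (Infinite.natEmbedding _)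
  obtain ⟨A, hAE, hA, hdom⟩ := exists_finite_minimal_elements {α | ∃ f ∈ I, IsMonicAt p f.1 α}
  have := hA.fintype
  choose f hfI hf using fun a : A => hAE a.2
  refine ⟨(Set.finite_range f).toFinset, le_antisymm (Submodule.span_le.2 ?_) fun g hg => ?_⟩
  · simpa [Set.range_subset_iff] using hfI
  obtain ⟨q, rem, hrem, hgq⟩ := exists_eq_sum_mul_add_of_isMonicAt p hf g
  have hremI : rem ∈ I := by
    rw [eq_sub_of_add_eq' hgq.symm]
    exact I.sub_mem hg (I.sum_mem fun a _ => Ideal.mul_mem_left I _ (hfI a))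
  have hrem0 : rem = 0 := by
    by_contra hne
    obtain ⟨α, hα, hmonic⟩ := exists_isMonicAt_smul p (Subtype.coe_ne_coe.2 hne)
    obtain ⟨a, haA, haα⟩ := hdom α
      ⟨(MvPowerSeries.coeff α rem.1)⁻¹ • rem, Submodule.smul_of_tower_mem I _ hremI, hmonic⟩
    exact hα (hrem α ⟨a, haA⟩ haα)
  rw [hgq, hrem0, add_zero]
  exact Ideal.sum_mem _ fun a _ => Ideal.mul_mem_left _ _ (Ideal.subset_span (by simp))

end Noetherian

section EvalSum

variable {σ 𝕜 : Type*} [NormedField 𝕜] {x : σ → 𝕜}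

/-- The sum at the point `x` of a power series, with value `0` if the series is not summable. -/
def evalSum (a : MvPowerSeries σ 𝕜) (x : σ → 𝕜) : 𝕜 :=
  ∑' α, MvPowerSeries.coeff α a * multiPow x α

lemma enorm_multiPow (x : σ → 𝕜) (α : σ →₀ ℕ) :
    ‖multiPow x α‖ₑ = (multiPow (fun i => ‖x i‖₊) α : ℝ≥0) :=
  congrArg _ (map_multiPow (nnnormHom : 𝕜 →*₀ ℝ≥0).toMonoidHom x α)

lemma summable_norm_coeff_mul_multiPow {a : MvPowerSeries σ 𝕜}
    (ha : weightedNorm (fun i => ‖x i‖₊) a ≠ ⊤) :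
    Summable fun α => ‖MvPowerSeries.coeff α a * multiPow x α‖ := by
  refine .of_enorm ?_
  simpa only [weightedNorm, enorm_norm, enorm_mul, enorm_multiPow] using ha

lemma evalSum_zero (x : σ → 𝕜) : evalSum 0 x = 0 := by
  simp [evalSum]

lemma evalSum_one (x : σ → 𝕜) : evalSum 1 x = 1 := by
  classical
  rw [evalSum, tsum_eq_single 0 fun α hα => by rw [MvPowerSeries.coeff_one, if_neg hα, zero_mul]]
  simp [multiPow_zero]

variable [CompleteSpace 𝕜] {a b : MvPowerSeries σ 𝕜}

lemma evalSum_add (ha : weightedNorm (fun i => ‖x i‖₊) a ≠ ⊤)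
    (hb : weightedNorm (fun i => ‖x i‖₊) b ≠ ⊤) :
    evalSum (a + b) x = evalSum a x + evalSum b x := by
  simp only [evalSum, map_add, add_mul]
  exact (summable_norm_coeff_mul_multiPow ha).of_norm.tsum_add
    (summable_norm_coeff_mul_multiPow hb).of_norm

lemma evalSum_mul (ha : weightedNorm (fun i => ‖x i‖₊) a ≠ ⊤)
    (hb : weightedNorm (fun i => ‖x i‖₊) b ≠ ⊤) :
    evalSum (a * b) x = evalSum a x * evalSum b x := by
  classical
  have ha' := summable_norm_coeff_mul_multiPow ha
  have hb' := summable_norm_coeff_mul_multiPow hb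
  have hab := summable_mul_of_summable_norm ha' hb'
  simp only [evalSum]
  rw [ha'.of_norm.tsum_mul_tsum_eq_tsum_sum_antidiagonal hb'.of_norm hab]
  refine tsum_congr fun α => ?_
  rw [MvPowerSeries.coeff_mul, Finset.sum_mul]
  refine Finset.sum_congr rfl fun β hβ => ?_
  rw [← Finset.HasAntidiagonal.mem_antidiagonal.1 hβ, multiPow_add, mul_mul_mul_comm]

end EvalSum

section Words

variable {σ 𝕜 : Type*}

/-- A word in the letters `σ`, as the pair of its length and the sequence of its letters; words
index the monomials in noncommuting variables. -/
abbrev Word (σ : Type*) : Type _ :=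
  Σ k, Fin k → σ

/-- The exponent of the monomial obtained by multiplying the letters of a word. -/
def wordExponent (w : Word σ) : σ →₀ ℕ :=
  ∑ j, Finsupp.single (w.2 j) 1

lemma degree_wordExponent (w : Word σ) : (wordExponent w).degree = w.1 := by
  simp [wordExponent]

lemma multiPow_wordExponent {M : Type*} [CommMonoid M] (x : σ → M) (w : Word σ) :
    multiPow x (wordExponent w) = ∏ j, x (w.2 j) := by
  simp only [wordExponent, multiPow_sum, multiPow_single_one]

lemma wordExponent_surjective : Function.Surjective (wordExponent (σ := σ)) := fun α => by
  induction α using Finsupp.induction_linear with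
  | zero => exact ⟨⟨0, Fin.elim0⟩, by simp [wordExponent]⟩
  | add α β hα hβ =>
    obtain ⟨⟨⟨k, v⟩, rfl⟩, ⟨l, w⟩, rfl⟩ := And.intro hα hβ
    exact ⟨⟨k + l, Fin.append v w⟩, by simp [wordExponent, Fin.sum_univ_add]⟩
  | single i n => exact ⟨⟨n, fun _ => i⟩, by simp [wordExponent]⟩

/-- The sum at `x` of the noncommutative power series with coefficients `b`. -/
def wordSum [NormedField 𝕜] (b : Word σ → 𝕜) (x : σ → 𝕜) : 𝕜 :=
  ∑' w, b w * multiPow x (wordExponent w)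

section Abelianization

variable [NormedField 𝕜]

lemma enorm_mul_multiPow_wordExponent_le {ρ : ℝ≥0} {x : σ → 𝕜} (hx : ∀ i, ‖x i‖₊ ≤ ρ) (c : 𝕜)
    (w : Word σ) : ‖c * multiPow x (wordExponent w)‖ₑ ≤ ‖c‖ₑ * (ρ ^ w.1 : ℝ≥0) := by
  rw [enorm_mul, enorm_multiPow, ← degree_wordExponent, ← multiPow_const]
  gcongr
  exact multiPow_le_multiPow hx _

lemma summable_mul_multiPow_wordExponent [CompleteSpace 𝕜] {b : Word σ → 𝕜} {ρ : ℝ≥0}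
    (hb : ∑' w, ‖b w‖ₑ * (ρ ^ w.1 : ℝ≥0) ≠ ⊤) {x : σ → 𝕜} (hx : ∀ i, ‖x i‖₊ ≤ ρ) :
    Summable fun w => b w * multiPow x (wordExponent w) :=
  .of_enorm <| ne_top_of_le_ne_top hb <|
    ENNReal.tsum_le_tsum fun w => enorm_mul_multiPow_wordExponent_le hx (b w) w

/-- The power series obtained from the noncommutative power series with coefficients `b` by
letting the variables commute. -/
def abelianization (b : Word σ → 𝕜) : MvPowerSeries σ 𝕜 :=
  fun α => ∑' w : wordExponent ⁻¹' {α}, b w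

lemma coeff_abelianization (b : Word σ → 𝕜) (α : σ →₀ ℕ) :
    MvPowerSeries.coeff α (abelianization b) = ∑' w : wordExponent ⁻¹' {α}, b w :=
  rfl

lemma weightedNorm_abelianization_le (b : Word σ → 𝕜) (ρ : ℝ≥0) :
    weightedNorm (fun _ => ρ) (abelianization b) ≤ ∑' w, ‖b w‖ₑ * (ρ ^ w.1 : ℝ≥0) := by
  rw [← ENNReal.tsum_fiberwise _ wordExponent]
  refine ENNReal.tsum_le_tsum fun α => ?_
  have hdeg (w : wordExponent ⁻¹' {α}) : w.1.1 = α.degree := by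
    rw [← degree_wordExponent, show wordExponent w.1 = α from w.2]
  rw [coeff_abelianization, multiPow_const]
  simp_rw [hdeg, ENNReal.tsum_mul_right]
  gcongr
  exact enorm_tsum_le_tsum_enorm

lemma evalSum_abelianization [CompleteSpace 𝕜] {b : Word σ → 𝕜} {ρ : ℝ≥0}
    (hb : ∑' w, ‖b w‖ₑ * (ρ ^ w.1 : ℝ≥0) ≠ ⊤) {x : σ → 𝕜} (hx : ∀ i, ‖x i‖₊ ≤ ρ) :
    evalSum (abelianization b) x = wordSum b x := by
  rw [wordSum, evalSum,
    ← ((summable_mul_multiPow_wordExponent hb hx).hasSum.tsum_fiberwise wordExponent).tsum_eq]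
  refine tsum_congr fun α => ?_
  rw [coeff_abelianization, ← tsum_mul_right]
  exact tsum_congr fun w => by rw [show wordExponent w.1 = α from w.2]

lemma exists_wordSum_eq_evalSum (a : MvPowerSeries σ 𝕜) :
    ∃ b : Word σ → 𝕜, (∀ x, wordSum b x = evalSum a x) ∧
      ∀ ρ : ℝ≥0, ∑' w, ‖b w‖ₑ * (ρ ^ w.1 : ℝ≥0) = weightedNorm (fun _ => ρ) a := by
  let word : (σ →₀ ℕ) → Word σ := Function.surjInv wordExponent_surjective
  have word_injective : Function.Injective word :=
    Function.injective_surjInv wordExponent_surjective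
  have wordExponent_word (α) : wordExponent (word α) = α :=
    Function.surjInv_eq wordExponent_surjective α
  let b : Word σ → 𝕜 := Function.extend word (fun α => MvPowerSeries.coeff α a) 0
  have b_word (α) : b (word α) = MvPowerSeries.coeff α a := word_injective.extend_apply _ _ α
  have hb (w) (hw : w ∉ Set.range word) : b w = 0 := Function.extend_apply' _ _ w hw
  refine ⟨b, fun x => ?_, fun ρ => ?_⟩
  · rw [wordSum, ← word_injective.tsum_eq
      (Function.support_subset_iff'.2 fun w hw => by simp [hb w hw])]
    simp_rw [b_word, wordExponent_word, evalSum]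
  · rw [← word_injective.tsum_eq (Function.support_subset_iff'.2 fun w hw => by simp [hb w hw])]
    simp_rw [b_word, ← degree_wordExponent (word _), wordExponent_word, weightedNorm,
      multiPow_const]

end Abelianization

section WordSeries

variable [Fintype σ] [NontriviallyNormedField 𝕜]

/-- The multilinear map `v ↦ ∏ j, v j (w j)`. -/
def wordMap {k : ℕ} (w : Fin k → σ) :
    ContinuousMultilinearMap 𝕜 (fun _ : Fin k => σ → 𝕜) 𝕜 :=
  (ContinuousMultilinearMap.mkPiAlgebra 𝕜 (Fin k) 𝕜).compContinuousLinearMap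
    fun j => ContinuousLinearMap.proj (w j)

lemma norm_wordMap_le {k : ℕ} (w : Fin k → σ) : ‖wordMap (𝕜 := 𝕜) w‖ ≤ 1 := by
  refine ContinuousMultilinearMap.opNorm_le_bound zero_le_one fun v => ?_
  simpa [wordMap, norm_prod] using
    Finset.prod_le_prod (fun _ _ => norm_nonneg _) fun j _ => norm_le_pi_norm (v j) (w j)

/-- The formal multilinear series with sum `wordSum b`. -/
def wordSeries (b : Word σ → 𝕜) : FormalMultilinearSeries 𝕜 (σ → 𝕜) 𝕜 :=
  fun k => ∑ w : Fin k → σ, b ⟨k, w⟩ • wordMap w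

lemma wordSeries_apply_diag (b : Word σ → 𝕜) (k : ℕ) (x : σ → 𝕜) :
    (wordSeries b k fun _ => x) = ∑ w, b ⟨k, w⟩ * multiPow x (wordExponent ⟨k, w⟩) := by
  simp [wordSeries, wordMap, multiPow_wordExponent]

lemma enorm_wordSeries_le (b : Word σ → 𝕜) (k : ℕ) :
    ‖wordSeries b k‖ₑ ≤ ∑ w, ‖b ⟨k, w⟩‖ₑ := by
  refine (enorm_sum_le (ε := ContinuousMultilinearMap 𝕜 (fun _ : Fin k => σ → 𝕜) 𝕜) _ _).trans
    (Finset.sum_le_sum fun w _ => ?_)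
  rw [enorm_smul]
  exact mul_le_of_le_one_right' (enorm_le_coe.2 (norm_wordMap_le w))

lemma le_radius_wordSeries {b : Word σ → 𝕜} {ρ : ℝ≥0}
    (hb : ∑' w, ‖b w‖ₑ * (ρ ^ w.1 : ℝ≥0) ≠ ⊤) : ρ ≤ (wordSeries b).radius := by
  refine (wordSeries b).le_radius_of_bound_nnreal
    (∑' w, ‖b w‖ₑ * (ρ ^ w.1 : ℝ≥0)).toNNReal fun k => ?_
  rw [← ENNReal.coe_le_coe, ENNReal.coe_toNNReal hb, ENNReal.coe_mul,
    ENNReal.tsum_sigma' fun w => ‖b w‖ₑ * (ρ ^ w.1 : ℝ≥0)]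
  calc ‖wordSeries b k‖ₑ * (ρ ^ k : ℝ≥0) ≤ (∑ w, ‖b ⟨k, w⟩‖ₑ) * (ρ ^ k : ℝ≥0) := by
        gcongr
        exact enorm_wordSeries_le b k
    _ = ∑' w : Fin k → σ, ‖b ⟨k, w⟩‖ₑ * (ρ ^ k : ℝ≥0) := by rw [Finset.sum_mul, tsum_fintype]
    _ ≤ _ := ENNReal.le_tsum k

lemma nnnorm_apply_le_of_mem_eball {ρ : ℝ≥0} {x : σ → 𝕜} (hx : x ∈ Metric.eball 0 ρ) (i : σ) :
    ‖x i‖₊ ≤ ρ := by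
  refine (nnnorm_le_pi_nnnorm x i).trans ?_
  rw [Metric.mem_eball, edist_zero_right] at hx
  exact_mod_cast hx.le

lemma hasSum_wordSeries [CompleteSpace 𝕜] {b : Word σ → 𝕜} {ρ : ℝ≥0}
    (hb : ∑' w, ‖b w‖ₑ * (ρ ^ w.1 : ℝ≥0) ≠ ⊤) {x : σ → 𝕜} (hx : ∀ i, ‖x i‖₊ ≤ ρ) :
    HasSum (fun k => wordSeries b k fun _ => x) (wordSum b x) := by
  simp_rw [wordSeries_apply_diag]
  exact (summable_mul_multiPow_wordExponent hb hx).hasSum.sigma fun k => hasSum_fintype _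

lemma analyticAt_wordSum [CompleteSpace 𝕜] {b : Word σ → 𝕜} {ρ : ℝ≥0} (hρ : 0 < ρ)
    (hb : ∑' w, ‖b w‖ₑ * (ρ ^ w.1 : ℝ≥0) ≠ ⊤) : AnalyticAt 𝕜 (wordSum b) 0 :=
  ⟨wordSeries b, ρ, le_radius_wordSeries hb, by simpa using hρ, fun {y} hy => by
    rw [zero_add]
    exact hasSum_wordSeries hb (nnnorm_apply_le_of_mem_eball hy)⟩

/-- The value of a formal multilinear series on the basis vectors spelled by a word. -/
def wordCoeff [DecidableEq σ] (p : FormalMultilinearSeries 𝕜 (σ → 𝕜) 𝕜) (w : Word σ) : 𝕜 :=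
  p w.1 fun j => Pi.single (w.2 j) 1

variable [DecidableEq σ] (p : FormalMultilinearSeries 𝕜 (σ → 𝕜) 𝕜)

lemma enorm_wordCoeff_le (w : Word σ) : ‖wordCoeff p w‖ₑ ≤ ‖p w.1‖ₑ :=
  enorm_le_iff_norm_le.2 <| ((p w.1).le_opNorm _).trans_eq <| by
    rw [Finset.prod_eq_one fun j _ => by rw [Pi.norm_single, norm_one], mul_one]

lemma wordSeries_wordCoeff_apply_diag (k : ℕ) (x : σ → 𝕜) :
    (wordSeries (wordCoeff p) k fun _ => x) = p k fun _ => x := by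
  have hx : x = ∑ i, x i • Pi.single i 1 := by
    simp_rw [← Pi.single_smul, smul_eq_mul, mul_one, Finset.univ_sum_single]
  conv_rhs => rw [hx, (p k).map_sum]
  rw [wordSeries_apply_diag]
  refine Finset.sum_congr rfl fun w _ => ?_
  rw [(p k).map_smul_univ, multiPow_wordExponent, mul_comm, smul_eq_mul, wordCoeff]

lemma exists_tsum_wordCoeff_ne_top (hp : 0 < p.radius) :
    ∃ ρ : ℝ≥0, 0 < ρ ∧ ∑' w, ‖wordCoeff p w‖ₑ * (ρ ^ w.1 : ℝ≥0) ≠ ⊤ := by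
  obtain ⟨R, hR, hRp⟩ := ENNReal.lt_iff_exists_nnreal_btwn.1 hp
  let n : ℝ≥0 := Fintype.card σ
  obtain ⟨ρ, hρ, hnρ⟩ : ∃ ρ : ℝ≥0, 0 < ρ ∧ n * ρ ≤ R :=
    ⟨R / (n + 1), div_pos (by exact_mod_cast hR) (by positivity), by
      rw [mul_div_left_comm]
      exact mul_le_of_le_one_right' (div_le_one_of_le₀ (by simp) zero_le)⟩
  refine ⟨ρ, hρ, ne_top_of_le_ne_top
    (ENNReal.tsum_coe_ne_top_iff_summable.2 (p.summable_nnnorm_mul_pow hRp)) ?_⟩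
  rw [ENNReal.tsum_sigma' fun w => ‖wordCoeff p w‖ₑ * (ρ ^ w.1 : ℝ≥0)]
  refine ENNReal.tsum_le_tsum fun k => ?_
  calc ∑' w : Fin k → σ, ‖wordCoeff p ⟨k, w⟩‖ₑ * (ρ ^ k : ℝ≥0)
      ≤ ∑' _ : Fin k → σ, ‖p k‖ₑ * (ρ ^ k : ℝ≥0) := by
        gcongr with w
        exact enorm_wordCoeff_le p ⟨k, w⟩
    _ = ‖p k‖ₑ * ((n * ρ) ^ k : ℝ≥0) := by
        rw [tsum_fintype, Finset.sum_const, Finset.card_univ, Fintype.card_fun, Fintype.card_fin,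
          nsmul_eq_mul, mul_left_comm, mul_pow]
        push_cast [n]
        rfl
    _ ≤ (‖p k‖₊ * R ^ k : ℝ≥0) := by
        rw [ENNReal.coe_mul]
        gcongr
        exact le_rfl

end WordSeries

end Words

section Convergence

variable {σ 𝕜 : Type*}

lemma exists_weightedNorm_const_ne_top [Finite σ] [NormedField 𝕜] {a : MvPowerSeries σ 𝕜}
    (ha : a ∈ convergentMvPowerSeries σ 𝕜) :
    ∃ ρ : ℝ≥0, 0 < ρ ∧ weightedNorm (fun _ => ρ) a ≠ ⊤ := by
  obtain ⟨r, hr, har⟩ := ha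
  obtain ⟨ρ, hρr, hρ⟩ := ((eventually_all.2 fun i =>
    eventually_nhdsWithin_of_eventually_nhds (eventually_le_nhds (hr i))).and
      (self_mem_nhdsWithin (a := (0 : ℝ≥0)) (s := Set.Ioi 0))).exists
  exact ⟨ρ, hρ, ne_top_of_le_ne_top har (weightedNorm_mono hρr a)⟩

lemma eventually_nnnorm_apply_le [Finite σ] [NormedField 𝕜] {ρ : ℝ≥0} (hρ : 0 < ρ) :
    ∀ᶠ x in 𝓝 (0 : σ → 𝕜), ∀ i, ‖x i‖₊ ≤ ρ :=
  eventually_all.2 fun i =>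
    ((continuous_apply i).nnnorm.tendsto' 0 0 (by simp)).eventually_le_const hρ

lemma eventually_weightedNorm_nnnorm_ne_top [Finite σ] [NormedField 𝕜] {a : MvPowerSeries σ 𝕜}
    (ha : a ∈ convergentMvPowerSeries σ 𝕜) :
    ∀ᶠ x in 𝓝 (0 : σ → 𝕜), weightedNorm (fun i => ‖x i‖₊) a ≠ ⊤ := by
  obtain ⟨ρ, hρ, haρ⟩ := exists_weightedNorm_const_ne_top ha
  filter_upwards [eventually_nnnorm_apply_le hρ] with x hx
  exact ne_top_of_le_ne_top haρ (weightedNorm_mono hx a)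

variable [Fintype σ] [NontriviallyNormedField 𝕜] [CompleteSpace 𝕜]

lemma analyticAt_evalSum {a : MvPowerSeries σ 𝕜} (ha : a ∈ convergentMvPowerSeries σ 𝕜) :
    AnalyticAt 𝕜 (evalSum a) 0 := by
  obtain ⟨ρ, hρ, haρ⟩ := exists_weightedNorm_const_ne_top ha
  obtain ⟨b, hba, hb⟩ := exists_wordSum_eq_evalSum a
  rw [← funext hba]
  exact analyticAt_wordSum hρ ((hb ρ).trans_ne haρ)

lemma exists_evalSum_eventuallyEq {f : (σ → 𝕜) → 𝕜} (hf : AnalyticAt 𝕜 f 0) :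
    ∃ a ∈ convergentMvPowerSeries σ 𝕜, evalSum a =ᶠ[𝓝 0] f := by
  classical
  obtain ⟨p, hp⟩ := hf
  obtain ⟨ρ, hρ, hb⟩ := exists_tsum_wordCoeff_ne_top p hp.radius_pos
  refine ⟨abelianization (wordCoeff p), ⟨fun _ => ρ, fun _ => hρ,
    ne_top_of_le_ne_top hb (weightedNorm_abelianization_le _ ρ)⟩, ?_⟩
  filter_upwards [hp.eventually_hasSum, eventually_nnnorm_apply_le hρ] with x hpx hx
  have hsum := hasSum_wordSeries hb hx
  simp_rw [wordSeries_wordCoeff_apply_diag] at hsum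
  rw [evalSum_abelianization hb hx, hsum.unique hpx, zero_add]

end Convergence

section Germs

variable (𝕜 : Type*) {E : Type*} (F : Type*) [NontriviallyNormedField 𝕜] [NormedAddCommGroup E]
  [NormedSpace 𝕜 E] [NormedAddCommGroup F] [NormedSpace 𝕜 F]

/-- The ring of germs at `x` of analytic functions with values in the base field. -/
def analyticGerms (x : E) : Subring ((𝓝 x).Germ 𝕜) where
  carrier := {g | ∃ f : E → 𝕜, AnalyticAt 𝕜 f x ∧ g = ↑f}
  mul_mem' := by
    rintro _ _ ⟨f, hf, rfl⟩ ⟨f', hf', rfl⟩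
    exact ⟨f * f', hf.mul hf', rfl⟩
  one_mem' := ⟨fun _ => 1, analyticAt_const, rfl⟩
  add_mem' := by
    rintro _ _ ⟨f, hf, rfl⟩ ⟨f', hf', rfl⟩
    exact ⟨f + f', hf.add hf', rfl⟩
  zero_mem' := ⟨fun _ => 0, analyticAt_const, rfl⟩
  neg_mem' := by
    rintro _ ⟨f, hf, rfl⟩
    exact ⟨-f, hf.neg, rfl⟩

/-- The module of germs at `x` of analytic maps to `F`, over the ring of germs at `x` of analytic
functions. -/
def analyticMapGerms (x : E) : Submodule (analyticGerms 𝕜 x) ((𝓝 x).Germ F) where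
  carrier := {g | ∃ f : E → F, AnalyticAt 𝕜 f x ∧ g = ↑f}
  add_mem' := by
    rintro _ _ ⟨f, hf, rfl⟩ ⟨f', hf', rfl⟩
    exact ⟨f + f', hf.add hf', rfl⟩
  zero_mem' := ⟨fun _ => 0, analyticAt_const, rfl⟩
  smul_mem' := by
    rintro ⟨_, c, hc, rfl⟩ _ ⟨f, hf, rfl⟩
    exact ⟨fun y => c y • f y, hc.smul hf, rfl⟩

variable {𝕜 F}

section Ring

variable {σ : Type*}

lemma tendsto_coordinates (e : E ≃L[𝕜] (σ → 𝕜)) (x : E) :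
    Tendsto (fun y => e (y - x)) (𝓝 x) (𝓝 0) :=
  Continuous.tendsto' (by fun_prop) x 0 (by simp)

variable [Finite σ] [CompleteSpace 𝕜]

lemma analyticAt_evalSum_coordinates {a : MvPowerSeries σ 𝕜}
    (ha : a ∈ convergentMvPowerSeries σ 𝕜) (e : E ≃L[𝕜] (σ → 𝕜)) (x : E) :
    AnalyticAt 𝕜 (fun y => evalSum a (e (y - x))) x := by
  have := Fintype.ofFinite σ
  have he : AnalyticAt 𝕜 (fun y => e (y - x)) x :=
    (e.analyticAt _).comp (f := fun y => y - x) (by fun_prop)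
  exact (analyticAt_evalSum ha).comp_of_eq he (by simp)

/-- The germ at `x` of the sum of a convergent power series, in the linear coordinates centred at
`x` given by `e`. -/
def germOfConvergent (e : E ≃L[𝕜] (σ → 𝕜)) (x : E) :
    convergentMvPowerSeries σ 𝕜 →+* analyticGerms 𝕜 x :=
  have hne_top (a : convergentMvPowerSeries σ 𝕜) :=
    (tendsto_coordinates e x).eventually (eventually_weightedNorm_nnnorm_ne_top a.2)
  { toFun a := ⟨Germ.ofFun fun y => evalSum a.1 (e (y - x)), _,
      analyticAt_evalSum_coordinates a.2 e x, rfl⟩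
    map_one' := Subtype.ext <| Germ.coe_eq.2 <| .of_forall fun y => evalSum_one _
    map_zero' := Subtype.ext <| Germ.coe_eq.2 <| .of_forall fun y => evalSum_zero _
    map_mul' a b := Subtype.ext <| Germ.coe_eq.2 <| by
      filter_upwards [hne_top a, hne_top b] with y ha hb using evalSum_mul ha hb
    map_add' a b := Subtype.ext <| Germ.coe_eq.2 <| by
      filter_upwards [hne_top a, hne_top b] with y ha hb using evalSum_add ha hb }

lemma germOfConvergent_surjective (e : E ≃L[𝕜] (σ → 𝕜)) (x : E) :
    Function.Surjective (germOfConvergent e x) := by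
  have := Fintype.ofFinite σ
  rintro ⟨_, f, hf, rfl⟩
  have hg : AnalyticAt 𝕜 (fun z => f (e.symm z + x)) 0 :=
    hf.comp_of_eq ((e.symm.analyticAt 0).add analyticAt_const) (by simp)
  obtain ⟨a, ha, haf⟩ := exists_evalSum_eventuallyEq hg
  refine ⟨⟨a, ha⟩, Subtype.ext <| Germ.coe_eq.2 ?_⟩
  filter_upwards [(tendsto_coordinates e x).eventually haf] with y hy
  simpa using hy

instance isNoetherianRing_analyticGerms [FiniteDimensional 𝕜 E] (x : E) :
    IsNoetherianRing (analyticGerms 𝕜 x) :=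
  let e : E ≃L[𝕜] (Fin (Module.finrank 𝕜 E) → 𝕜) := (Module.finBasis 𝕜 E).equivFunL
  isNoetherianRing_of_surjective _ _ (germOfConvergent e x) (germOfConvergent_surjective e x)

end Ring

/-- The germ at `x` of the constant map with value `v`. -/
def constGerm (x : E) (v : F) : analyticMapGerms 𝕜 F x :=
  ⟨Germ.ofFun fun _ => v, _, analyticAt_const, rfl⟩

instance finite_analyticMapGerms [CompleteSpace 𝕜] [FiniteDimensional 𝕜 F] (x : E) :
    Module.Finite (analyticGerms 𝕜 x) (analyticMapGerms 𝕜 F x) := by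
  let b := Module.finBasis 𝕜 F
  refine ⟨Submodule.fg_def.2 ⟨_, Set.finite_range fun i => constGerm x (b i), eq_top_iff.2 ?_⟩⟩
  rintro ⟨_, f, hf, rfl⟩ -
  let coord (i) : analyticGerms 𝕜 x := ⟨Germ.ofFun fun y => b.repr (f y) i, _,
    ((b.coord i).toContinuousLinearMap.analyticAt _).comp hf, rfl⟩
  have hsum : (⟨Germ.ofFun f, f, hf, rfl⟩ : analyticMapGerms 𝕜 F x) =
      ∑ i, coord i • constGerm x (b i) := by
    have hf_eq : f = ∑ i, fun y => b.repr (f y) i • b i := by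
      ext y
      rw [Finset.sum_apply, b.sum_repr]
    refine Subtype.ext ?_
    rw [Submodule.coe_sum]
    exact (congrArg (Germ.coeAddHom (𝓝 x)) hf_eq).trans (map_sum (Germ.coeAddHom (𝓝 x)) _ _)
  rw [hsum]
  exact Submodule.sum_mem _ fun i _ => Submodule.smul_mem _ _ <|
    Submodule.subset_span <| Set.mem_range_self i

end Germs

theorem statement_2_general {𝕜 E : Type*} [NontriviallyNormedField 𝕜] [CompleteSpace 𝕜]
    [NormedAddCommGroup E] [NormedSpace 𝕜 E] [FiniteDimensional 𝕜 E] (x : E) :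
    IsNoetherianRing (analyticGerms 𝕜 x) ∧
      ∀ (F : Type*) [NormedAddCommGroup F] [NormedSpace 𝕜 F] [FiniteDimensional 𝕜 F],
        IsNoetherian (analyticGerms 𝕜 x) (analyticMapGerms 𝕜 F x) :=
  ⟨inferInstance, fun _ => isNoetherian_of_isNoetherianRing_of_finite _ _⟩

/-- Theorem 5.2: `𝒜_n` is a Noetherian ring and, for every `m ≥ 1`,
`𝒜_n^m` is a Noetherian `𝒜_n`-module. -/
theorem statement_2 (n : ℕ) :
    IsNoetherianRing (analyticGermSubring n) ∧
      ∀ m : ℕ, 1 ≤ m →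
        IsNoetherian (analyticGermSubring n) (analyticGermSubmodule n m) :=
  let ⟨hring, hmodule⟩ := statement_2_general (𝕜 := ℝ) (0 : Euc n)
  ⟨hring, fun m _ => hmodule (Euc m)⟩
end
end

section
/- Let N, ν, e be admissible dilation data. If γ_t(x) is real analytic on a neighborhood of (0,0) in ℝ^N × ℝ^n with γ_0(x) ≡ x, then there exists a finite subset ℱ′ ⊆ ℒ(𝒫 ∪ 𝒩) that strongly controls W(t,x). Moreover, the union of such an ℱ′ with any finite subset of ℒ(𝒫 ∪ 𝒩) still strongly controls W(t,x); in particular, for any finite 𝒮′ ⊆ ℒ(𝒫 ∪ 𝒩) there exists a finite subset of ℒ(𝒫 ∪ 𝒩) containing 𝒮′ that strongly controls W. -/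
open MeasureTheory Metric Filter Set
open scoped ENNReal NNReal Topology

noncomputable section

open Zhang

/-!
The fields `X_α` are the coefficients of the expansion of `W` in powers of `t`, and the point is
that `W` is a finite combination of the terms `t^α X_α` with analytic coefficients. Pairing with
dual variables `ξ` turns this into an ideal membership: the function `∑ k, ξ_k W_k(t, x)` should lie
in the ideal of analytic germs generated by all the terms `t^α ∑ k, ξ_k X_{α,k}(x)` of its
expansion. It agrees with elements of this ideal on every finite set of coefficients, and ideals of
convergent power series are closed: on polydiscs shrinking to the origin at suitable rates one
monomial of each series dominates the others, so that division with remainder can be solved by a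
Neumann series, and a nonzero remainder is incompatible with such an agreement. Taking the part
linear in `ξ` of the resulting identity gives the vector identity.
-/

namespace Zhang

section SummableFamilies

/-- The Banach space of absolutely summable real families indexed by `K`. -/
abbrev L1 (K : Type*) := lp (fun _ : K => ℝ) 1

namespace L1

open scoped Classical in
/-- The vectors of the canonical basis of `L1 K`. -/
def basis {K : Type*} (k : K) : L1 K := lp.single 1 k (1 : ℝ)

variable {K V : Type*} [NormedAddCommGroup V] [NormedSpace ℝ V]

lemma basis_apply_self (k : K) : basis k k = 1 := by simp [basis]

lemma basis_apply_of_ne {j k : K} (h : j ≠ k) : basis k j = 0 := by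
  simp [basis, h]

lemma norm_basis (k : K) : ‖basis k‖ = 1 := by
  simp [basis, lp.norm_single]

lemma summable_abs (g : L1 K) : Summable fun k => |g k| := by
  simpa using (lp.memℓp g).summable (by simp)

lemma norm_eq_tsum_abs (g : L1 K) : ‖g‖ = ∑' k, |g k| := by
  rw [lp.norm_eq_tsum_rpow (by simp)]
  simp

lemma summable_norm_smul {v : K → V} {C : ℝ} (hv : ∀ k, ‖v k‖ ≤ C) (g : L1 K) :
    Summable fun k => ‖g k • v k‖ := by
  refine Summable.of_nonneg_of_le (fun _ => norm_nonneg _) (fun k => ?_)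
    ((summable_abs g).mul_right C)
  rw [norm_smul, Real.norm_eq_abs]
  gcongr
  exact hv k

open scoped Classical in
lemma hom_ext {S T : L1 K →L[ℝ] V} (h : ∀ k, S (basis k) = T (basis k)) : S = T :=
  lp.ext_continuousLinearMap (by simp) fun k => ContinuousLinearMap.ext_ring (h k)

variable [CompleteSpace V]

/-- The bounded linear map out of `L1 K` with prescribed values on the canonical basis. -/
def lift (v : K → V) {C : ℝ} (hv : ∀ k, ‖v k‖ ≤ C) : L1 K →L[ℝ] V :=
  LinearMap.mkContinuous
    { toFun := fun g => ∑' k, g k • v k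
      map_add' := fun f g => by
        rw [← (summable_norm_smul hv f).of_norm.tsum_add (summable_norm_smul hv g).of_norm]
        simp [add_smul]
      map_smul' := fun c g => by
        rw [RingHom.id_apply, ← (summable_norm_smul hv g).of_norm.tsum_const_smul]
        simp [mul_smul] } C fun g => calc
    ‖∑' k, g k • v k‖ ≤ ∑' k, ‖g k • v k‖ := norm_tsum_le_tsum_norm (summable_norm_smul hv g)
    _ ≤ ∑' k, C * |g k| := (summable_norm_smul hv g).tsum_le_tsum (fun k => by
        rw [norm_smul, Real.norm_eq_abs, mul_comm]
        gcongr
        exact hv k) ((summable_abs g).mul_left C)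
    _ = C * ‖g‖ := by rw [tsum_mul_left, norm_eq_tsum_abs]

lemma lift_basis (v : K → V) {C : ℝ} (hv : ∀ k, ‖v k‖ ≤ C) (k : K) : lift v hv (basis k) = v k :=
  calc
    lift v hv (basis k) = ∑' j, basis k j • v j := rfl
    _ = basis k k • v k := tsum_eq_single k fun j hj => by rw [basis_apply_of_ne hj, zero_smul]
    _ = v k := by rw [basis_apply_self, one_smul]

lemma norm_lift_le (v : K → V) {C : ℝ} (hC : 0 ≤ C) (hv : ∀ k, ‖v k‖ ≤ C) : ‖lift v hv‖ ≤ C :=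
  LinearMap.mkContinuous_norm_le _ hC _

end L1

end SummableFamilies

section Monomials

variable {ι : Type*} [Fintype ι]

/-- The monomial `z ^ β`. -/
def mon (β : ι → ℕ) (z : ι → ℝ) : ℝ := ∏ i, z i ^ β i

lemma mon_zero (z : ι → ℝ) : mon 0 z = 1 := by simp [mon]

lemma mon_add (β β' : ι → ℕ) (z : ι → ℝ) : mon (β + β') z = mon β z * mon β' z := by
  simp [mon, pow_add, Finset.prod_mul_distrib]

lemma mon_mul (β : ι → ℕ) (z z' : ι → ℝ) : mon β (z * z') = mon β z * mon β z' := by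
  simp [mon, mul_pow, Finset.prod_mul_distrib]

lemma mon_single [DecidableEq ι] (i : ι) (z : ι → ℝ) : mon (Pi.single i 1) z = z i := by
  rw [mon, Finset.prod_eq_single i] <;> simp +contextual

lemma mul_mon_sub_single [DecidableEq ι] {β : ι → ℕ} {i : ι} (h : β i ≠ 0) (z : ι → ℝ) :
    z i * mon (β - Pi.single i 1) z = mon β z := by
  rw [← mon_single i z, ← mon_add, add_tsub_cancel_of_le]
  exact update_le_iff.2 ⟨Nat.one_le_iff_ne_zero.2 h, fun j _ => (β j).zero_le⟩

lemma abs_mon (β : ι → ℕ) (z : ι → ℝ) : |mon β z| = mon β fun i => |z i| := by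
  simp [mon, Finset.abs_prod]

lemma mon_pos (β : ι → ℕ) {z : ι → ℝ} (hz : ∀ i, 0 < z i) : 0 < mon β z :=
  Finset.prod_pos fun i _ => pow_pos (hz i) _

lemma abs_mon_le_mon (β : ι → ℕ) {z r : ι → ℝ} (h : ∀ i, |z i| ≤ r i) : |mon β z| ≤ mon β r := by
  rw [abs_mon]
  exact Finset.prod_le_prod (fun i _ => pow_nonneg (abs_nonneg _) _)
    fun i _ => pow_le_pow_left₀ (abs_nonneg _) (h i) _

lemma abs_mon_le_one (β : ι → ℕ) {z : ι → ℝ} (hz : ∀ i, |z i| ≤ 1) : |mon β z| ≤ 1 := by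
  simpa [mon] using abs_mon_le_mon β (r := 1) hz

/-- The sum of the power series with coefficients `a`; it is only meaningful where the series
converges. -/
def psum (a : (ι → ℕ) → ℝ) (z : ι → ℝ) : ℝ := ∑' β, a β * mon β z

lemma psum_mul (a : (ι → ℕ) → ℝ) (r z : ι → ℝ) :
    psum a (r * z) = psum (fun β => a β * mon β r) z := by
  simp [psum, mon_mul, mul_assoc]

lemma eventually_abs_le {κ : Type*} [Finite κ] {r : κ → ℝ} (hr : ∀ i, 0 < r i) :
    ∀ᶠ z : κ → ℝ in 𝓝 0, ∀ i, |z i| ≤ r i := by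
  refine eventually_all.2 fun i => ?_
  have h : Tendsto (fun z : κ → ℝ => |z i|) (𝓝 0) (𝓝 0) := by
    simpa using (continuous_apply i).abs.tendsto (0 : κ → ℝ)
  exact h.eventually_le_const (hr i)

namespace L1

/-- Evaluation of an absolutely summable power series at a point of the unit polydisc. -/
def eval (z : ι → ℝ) (hz : ∀ i, |z i| ≤ 1) : L1 (ι → ℕ) →L[ℝ] ℝ :=
  lift (fun β => mon β z) fun β => abs_mon_le_one β hz

lemma eval_apply (z : ι → ℝ) (hz : ∀ i, |z i| ≤ 1) (g : L1 (ι → ℕ)) : eval z hz g = psum g z :=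
  rfl

lemma eval_basis (z : ι → ℝ) (hz : ∀ i, |z i| ≤ 1) (β : ι → ℕ) : eval z hz (basis β) = mon β z :=
  lift_basis _ _ _

lemma abs_psum_le_norm {z : ι → ℝ} (hz : ∀ i, |z i| ≤ 1) (g : L1 (ι → ℕ)) : |psum g z| ≤ ‖g‖ := by
  simpa [eval_apply] using
    (eval z hz).le_of_opNorm_le (norm_lift_le _ zero_le_one fun β => abs_mon_le_one β hz) g

lemma norm_weighted_backward_basis_le [DecidableEq ι] (i : ι) (β : ι → ℕ) :
    ‖((β i : ℝ) / ∑ j, (β j : ℝ)) • basis (β - Pi.single i 1)‖ ≤ 1 := by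
  rw [norm_smul, norm_basis, mul_one, Real.norm_of_nonneg (by positivity)]
  exact div_le_one_of_le₀
    (Finset.single_le_sum (fun j _ => Nat.cast_nonneg (α := ℝ) (β j)) (Finset.mem_univ i))
    (by positivity)

open scoped Classical in
/-- The linear combination with coefficients `z` of the backward shifts `β ↦ β - eᵢ`. The Euler
weights `βᵢ / |β|` add up to `1` for `β ≠ 0`, and they vanish where the truncated subtraction
`β - eᵢ` is meaningless. -/
def backward : (ι → ℝ) →L[ℝ] (L1 (ι → ℕ) →L[ℝ] L1 (ι → ℕ)) :=
  ∑ i, (ContinuousLinearMap.proj (R := ℝ) (φ := fun _ : ι => ℝ) i).smulRight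
    (lift (fun β : ι → ℕ => ((β i : ℝ) / ∑ j, (β j : ℝ)) • basis (β - Pi.single i 1))
      (norm_weighted_backward_basis_le i))

lemma eval_backward_basis {z : ι → ℝ} (hz : ∀ i, |z i| ≤ 1) {β : ι → ℕ} (hβ : β ≠ 0) :
    eval z hz (backward z (basis β)) = mon β z := by
  classical
  have hsum : ∑ j, (β j : ℝ) ≠ 0 := by
    obtain ⟨i, hi⟩ := Function.ne_iff.1 hβ
    exact_mod_cast (Finset.sum_pos' (fun j _ => (β j).zero_le)
      ⟨i, Finset.mem_univ i, Nat.pos_of_ne_zero hi⟩).ne'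
  calc eval z hz (backward z (basis β))
      = ∑ i, (β i : ℝ) / (∑ j, (β j : ℝ)) * (z i * mon (β - Pi.single i 1) z) := by
        simp only [backward, sum_apply, ContinuousLinearMap.smulRight_apply,
          ContinuousLinearMap.proj_apply, smul_apply, lift_basis, map_sum, map_smul, eval_basis,
          smul_eq_mul, mul_left_comm]
    _ = ∑ i, (β i : ℝ) / (∑ j, (β j : ℝ)) * mon β z := by
        refine Finset.sum_congr rfl fun i _ => ?_
        by_cases hi : β i = 0
        · simp [hi]
        · rw [mul_mon_sub_single hi]
    _ = mon β z := by rw [← Finset.sum_mul, ← Finset.sum_div, div_self hsum, one_mul]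

lemma eval_comp_one_sub_backward {z : ι → ℝ} (hz : ∀ i, |z i| ≤ 1) :
    (eval z hz).comp (1 - backward z) = lp.evalCLM ℝ (fun _ : ι → ℕ => ℝ) 1 0 := by
  refine hom_ext fun β => ?_
  change eval z hz (basis β - backward z (basis β)) = basis β 0
  rw [map_sub, eval_basis]
  by_cases hβ : β = 0
  · simp [hβ, backward, lift_basis, basis_apply_self, mon_zero]
  · rw [eval_backward_basis hz hβ, sub_self, basis_apply_of_ne (Ne.symm hβ)]

theorem analyticAt_psum (g : L1 (ι → ℕ)) : AnalyticAt ℝ (psum g) 0 := by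
  have hinv : AnalyticAt ℝ (fun z : ι → ℝ => Ring.inverse (1 - backward z)) 0 := by
    refine AnalyticAt.fun_comp (g := fun x : L1 (ι → ℕ) →L[ℝ] L1 (ι → ℕ) => Ring.inverse (1 - x))
      ?_ (ContinuousLinearMap.analyticAt (backward (ι := ι)) 0)
    rw [map_zero]
    exact analyticAt_inverse_one_sub ℝ _
  have hunit : ∀ᶠ z : ι → ℝ in 𝓝 0, IsUnit (1 - backward z) := by
    have hcont : ContinuousAt (fun z : ι → ℝ => 1 - backward z) 0 := by fun_prop
    exact hcont.eventually (Units.isOpen.mem_nhds (by simp))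
  have hcoeff := (((lp.evalCLM ℝ (fun _ : ι → ℕ => ℝ) 1 0).comp
    (ContinuousLinearMap.apply ℝ _ g)).analyticAt _).fun_comp hinv
  refine hcoeff.congr ?_
  filter_upwards [hunit, eventually_abs_le fun _ : ι => one_pos] with z hz hz1
  change lp.evalCLM ℝ (fun _ : ι → ℕ => ℝ) 1 0 (Ring.inverse (1 - backward z) g) = _
  rw [← eval_comp_one_sub_backward hz1, ContinuousLinearMap.comp_apply, ← mul_apply_eq_comp,
    Ring.mul_inverse_cancel _ hz]
  rfl

end L1

end Monomials

section Expansion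

variable {ι : Type*} [Fintype ι]

lemma mon_sum_single [DecidableEq ι] {k : ℕ} (w : Fin k → ι) (z : ι → ℝ) :
    mon (∑ j, Pi.single (w j) 1) z = ∏ j, z (w j) := by
  induction k with
  | zero => simp [mon_zero]
  | succ k ih => rw [Fin.sum_univ_succ, Fin.prod_univ_succ, mon_add, mon_single, ih]

namespace L1

open scoped Classical in
/-- The coefficients of the homogeneous polynomial `z ↦ p (z, …, z)`. -/
def ofMultilinear {k : ℕ} (p : ContinuousMultilinearMap ℝ (fun _ : Fin k => ι → ℝ) ℝ) :
    L1 (ι → ℕ) :=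
  ∑ w : Fin k → ι, p (fun j => Pi.single (w j) 1) • basis (∑ j, Pi.single (w j) 1)

lemma eval_ofMultilinear {z : ι → ℝ} (hz : ∀ i, |z i| ≤ 1) {k : ℕ}
    (p : ContinuousMultilinearMap ℝ (fun _ : Fin k => ι → ℝ) ℝ) :
    eval z hz (ofMultilinear p) = p fun _ => z := by
  classical
  calc eval z hz (ofMultilinear p)
      = ∑ w : Fin k → ι, p (fun j => Pi.single (w j) 1) * ∏ j, z (w j) := by
        simp only [ofMultilinear, map_sum, map_smul, eval_basis, mon_sum_single, smul_eq_mul]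
    _ = ∑ w : Fin k → ι, p fun j => z (w j) • Pi.single (w j) 1 := by
        refine Finset.sum_congr rfl fun w _ => ?_
        rw [p.map_smul_univ (fun j => z (w j)) fun j => Pi.single (w j) 1, smul_eq_mul, mul_comm]
    _ = p fun _ => ∑ i, z i • Pi.single i 1 := by rw [p.map_sum]
    _ = p fun _ => z := by rw [← pi_eq_sum_univ' z]

lemma norm_ofMultilinear_le {k : ℕ} (p : ContinuousMultilinearMap ℝ (fun _ : Fin k => ι → ℝ) ℝ) :
    ‖ofMultilinear p‖ ≤ (Fintype.card ι : ℝ) ^ k * ‖p‖ := by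
  classical
  calc ‖ofMultilinear p‖ ≤ ∑ _w : Fin k → ι, ‖p‖ := norm_sum_le_of_le _ fun w _ => by
        rw [norm_smul, norm_basis, mul_one]
        simpa [Pi.norm_single] using p.le_opNorm fun j => Pi.single (w j) 1
    _ = (Fintype.card ι : ℝ) ^ k * ‖p‖ := by simp

theorem exists_psum_of_analyticAt {f : (ι → ℝ) → ℝ} (hf : AnalyticAt ℝ f 0) :
    ∃ (g : L1 (ι → ℕ)) (R : ℝ), 0 < R ∧
      ∀ z : ι → ℝ, (∀ i, |z i| ≤ 1) → psum g z = f (R • z) := by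
  obtain ⟨p, ρ, hp⟩ := hf
  obtain ⟨r, hr0, hr⟩ := ENNReal.lt_iff_exists_nnreal_btwn.1 hp.r_pos
  replace hr0 : (0 : ℝ) < r := by exact_mod_cast hr0
  -- The factor `card ι + 1` absorbs the number of terms of the `k`-th homogeneous polynomial.
  set R : ℝ := r / (Fintype.card ι + 1)
  have hR : 0 < R := by positivity
  have hRr : R ≤ r := div_le_self hr0.le (by simp)
  have hcard : R * Fintype.card ι ≤ r := by
    rw [div_mul_eq_mul_div, div_le_iff₀ (by positivity)]
    nlinarith
  have hsum : Summable fun k => R ^ k • ofMultilinear (p k) := by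
    refine Summable.of_norm_bounded (p.summable_norm_mul_pow (hr.trans_le hp.r_le)) fun k => ?_
    calc ‖R ^ k • ofMultilinear (p k)‖
        ≤ R ^ k * ((Fintype.card ι : ℝ) ^ k * ‖p k‖) := by
          rw [norm_smul, norm_pow, Real.norm_of_nonneg hR.le]
          gcongr
          exact norm_ofMultilinear_le _
      _ = ‖p k‖ * (R * Fintype.card ι) ^ k := by rw [mul_pow]; ring
      _ ≤ ‖p k‖ * r ^ k := by gcongr
  refine ⟨∑' k, R ^ k • ofMultilinear (p k), R, hR, fun z hz => ?_⟩
  have hmem : R • z ∈ Metric.eball (0 : ι → ℝ) ρ := by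
    have hnorm : ‖R • z‖ ≤ r := calc
      ‖R • z‖ = R * ‖z‖ := by rw [norm_smul, Real.norm_of_nonneg hR.le]
      _ ≤ R * 1 := by gcongr; exact (pi_norm_le_iff_of_nonneg zero_le_one).2 hz
      _ ≤ r := by simpa using hRr
    rw [Metric.mem_eball, edist_zero_right]
    exact lt_of_le_of_lt (enorm_le_coe.2 hnorm) hr
  calc psum (∑' k, R ^ k • ofMultilinear (p k) : L1 (ι → ℕ)) z
      = ∑' k, eval z hz (R ^ k • ofMultilinear (p k)) := (eval z hz).map_tsum hsum
    _ = ∑' k, p k fun _ => R • z := tsum_congr fun k => by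
        rw [map_smul, eval_ofMultilinear, (p k).map_smul_univ (fun _ => R) fun _ => z]
        simp
    _ = f (R • z) := by simpa using (hp.hasSum hmem).tsum_eq

end L1

end Expansion

section ConvergentSeries

variable {ι : Type*} [Fintype ι]

lemma mon_div (β : ι → ℕ) (z r : ι → ℝ) : mon β (z / r) = mon β z / mon β r := by
  simp [mon, div_pow, Finset.prod_div_distrib]

lemma psum_div_mon (a : (ι → ℕ) → ℝ) (r z : ι → ℝ) :
    psum (fun β => a β / mon β r) z = psum a (z / r) := by
  simp only [psum, mon_div, div_mul_eq_mul_div, mul_div_assoc]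

/-- A power series converges if it does so absolutely on some polydisc around the origin. -/
def Conv (a : (ι → ℕ) → ℝ) : Prop :=
  ∃ r : ι → ℝ, (∀ i, 0 < r i) ∧ Summable fun β => a β * mon β r

lemma summable_mul_mon {a : (ι → ℕ) → ℝ} {r z : ι → ℝ} (ha : Summable fun β => a β * mon β r)
    (hz : ∀ i, |z i| ≤ r i) : Summable fun β => a β * mon β z := by
  refine Summable.of_norm_bounded ha.abs fun β => ?_
  rw [norm_mul, abs_mul, Real.norm_eq_abs, Real.norm_eq_abs]
  exact mul_le_mul_of_nonneg_left ((abs_mon_le_mon β hz).trans (le_abs_self _)) (abs_nonneg _)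

lemma Conv.eventually_summable {a : (ι → ℕ) → ℝ} (ha : Conv a) :
    ∀ᶠ z in 𝓝 0, Summable fun β => a β * mon β z := by
  obtain ⟨r, hr, hs⟩ := ha
  filter_upwards [eventually_abs_le hr] with z hz using summable_mul_mon hs hz

lemma L1.conv_div_mon (g : L1 (ι → ℕ)) {r : ι → ℝ} (hr : ∀ i, 0 < r i) :
    Conv fun β => g β / mon β r :=
  ⟨r, hr, (L1.summable_abs g).of_abs.congr fun β => (div_mul_cancel₀ _ (mon_pos β hr).ne').symm⟩

/-- An absolutely convergent series, as an element of `L1` after rescaling its polydisc. -/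
def L1.ofSummable {a : (ι → ℕ) → ℝ} {r : ι → ℝ} (h : Summable fun β => a β * mon β r) :
    L1 (ι → ℕ) :=
  ⟨fun β => a β * mon β r, memℓp_gen (by simpa [abs_mul] using h.abs)⟩

lemma analyticAt_eval (i : ι) (z : ι → ℝ) : AnalyticAt ℝ (fun z : ι → ℝ => z i) z :=
  (ContinuousLinearMap.proj (R := ℝ) (φ := fun _ => ℝ) i).analyticAt z

theorem Conv.analyticAt_psum {a : (ι → ℕ) → ℝ} (ha : Conv a) : AnalyticAt ℝ (psum a) 0 := by
  obtain ⟨r, hr, hs⟩ := ha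
  have hps : psum a = fun z => psum (L1.ofSummable hs) (z / r) := by
    ext z
    have hz : r * (z / r) = z := funext fun i => mul_div_cancel₀ (z i) (hr i).ne'
    exact (congrArg (psum a) hz).symm.trans (psum_mul a r (z / r))
  have hdiv : AnalyticAt ℝ (fun z : ι → ℝ => z / r) 0 :=
    AnalyticAt.pi fun i => (analyticAt_eval i 0).div_const
  rw [hps]
  exact (L1.analyticAt_psum (L1.ofSummable hs)).fun_comp_of_eq hdiv (funext fun i => zero_div (r i))

theorem exists_conv_psum_eventuallyEq {f : (ι → ℝ) → ℝ} (hf : AnalyticAt ℝ f 0) :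
    ∃ a, Conv a ∧ psum a =ᶠ[𝓝 0] f := by
  obtain ⟨g, R, hR, hg⟩ := L1.exists_psum_of_analyticAt hf
  refine ⟨fun β => g β / mon β fun _ => R, L1.conv_div_mon g fun _ => hR, ?_⟩
  filter_upwards [eventually_abs_le fun _ : ι => hR] with z hz
  rw [psum_div_mon, hg _ fun i => ?_]
  · congr 1
    ext i
    simp [mul_div_cancel₀, hR.ne']
  · rw [Pi.div_apply, abs_div, abs_of_pos hR]
    exact div_le_one_of_le₀ (hz i) hR.le

lemma Conv.sub {a b : (ι → ℕ) → ℝ} (ha : Conv a) (hb : Conv b) : Conv (a - b) := by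
  obtain ⟨r, hr, hra⟩ := ha
  obtain ⟨s, hs, hsb⟩ := hb
  have hpos : ∀ i, 0 < min (r i) (s i) := fun i => lt_min (hr i) (hs i)
  refine ⟨fun i => min (r i) (s i), hpos, ?_⟩
  simp only [Pi.sub_apply, sub_mul]
  exact (summable_mul_mon hra fun i => by simp [abs_of_pos (hpos i)]).sub
    (summable_mul_mon hsb fun i => by simp [abs_of_pos (hpos i)])

lemma psum_sub {a b : (ι → ℕ) → ℝ} (ha : Conv a) (hb : Conv b) :
    psum (a - b) =ᶠ[𝓝 0] psum a - psum b := by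
  filter_upwards [ha.eventually_summable, hb.eventually_summable] with z hza hzb
  simp only [psum, Pi.sub_apply, sub_mul, hza.tsum_sub hzb]

end ConvergentSeries

section PrimeWeights

variable {ι : Type*} [Fintype ι]

/-- Distinct primes attached to the elements of a finite type. -/
def primeOf (i : ι) : ℕ := Nat.nth Nat.Prime (Fintype.equivFin ι i)

lemma prime_primeOf (i : ι) : (primeOf i).Prime := Nat.prime_nth_prime _

lemma primeOf_injective : Function.Injective (primeOf : ι → ℕ) := fun i j h => by
  have := Nat.nth_injective Nat.infinite_setOfPred_prime h
  exact (Fintype.equivFin ι).injective (Fin.ext this)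

/-- The encoding of a multi-index by the integer `∏ pᵢ ^ βᵢ`; comparing codes is a monomial
order. -/
def code (β : ι → ℕ) : ℕ := ∏ i, primeOf i ^ β i

lemma code_pos (β : ι → ℕ) : 0 < code β :=
  Finset.prod_pos fun i _ => pow_pos (prime_primeOf i).pos _

lemma factorization_code (β : ι → ℕ) (i : ι) : (code β).factorization (primeOf i) = β i := by
  classical
  rw [code, Nat.factorization_prod fun j _ => pow_ne_zero _ (prime_primeOf j).ne_zero,
    Finsupp.finsetSum_apply, Finset.sum_eq_single i]
  · simp [(prime_primeOf i).factorization_self]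
  · intro j _ hj
    rw [(prime_primeOf j).factorization_pow, Finsupp.single_apply,
      if_neg fun h => hj (primeOf_injective h)]
  · simp

lemma code_injective : Function.Injective (code : (ι → ℕ) → ℕ) := fun β β' h => by
  ext i
  rw [← factorization_code β i, h, factorization_code]

/-- The polyradius `(pᵢ⁻¹) ^ σ`. As `σ → ∞` these polyradii shrink to the origin, along a curve on
which distinct monomials have distinct orders of magnitude. -/
def rad (σ : ℕ) (i : ι) : ℝ := ((primeOf i : ℝ)⁻¹) ^ σ

lemma rad_pos (σ : ℕ) (i : ι) : 0 < rad σ i :=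
  pow_pos (inv_pos.2 (by exact_mod_cast (prime_primeOf i).pos)) _

lemma rad_le (σ : ℕ) (i : ι) : rad σ i ≤ (1 / 2) ^ σ := by
  refine pow_le_pow_left₀ (by positivity) ?_ _
  rw [one_div]
  exact inv_anti₀ two_pos (by exact_mod_cast (prime_primeOf i).two_le)

lemma tendsto_rad : Tendsto (rad : ℕ → ι → ℝ) atTop (𝓝 0) :=
  tendsto_pi_nhds.2 fun i => squeeze_zero (fun σ => (rad_pos σ i).le) (fun σ => rad_le σ i)
    (tendsto_pow_atTop_nhds_zero_of_lt_one (by norm_num) (by norm_num))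

lemma rad_add (σ τ : ℕ) : (rad (σ + τ) : ι → ℝ) = rad σ * rad τ := by
  ext i
  simp [rad, pow_add]

lemma mon_rad (β : ι → ℕ) (σ : ℕ) : mon β (rad σ) = ((code β : ℝ)⁻¹) ^ σ := by
  rw [mon, code, Nat.cast_prod, ← Finset.prod_inv_distrib, ← Finset.prod_pow]
  refine Finset.prod_congr rfl fun i _ => ?_
  rw [rad, Nat.cast_pow, ← inv_pow, pow_right_comm]

lemma mon_rad_pos (β : ι → ℕ) (σ : ℕ) : 0 < mon β (rad σ) := mon_pos β (rad_pos σ)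

/-- `b` is the initial exponent of the power series with coefficients `a`. -/
def IsInit (a : (ι → ℕ) → ℝ) (b : ι → ℕ) : Prop :=
  a b ≠ 0 ∧ ∀ β, a β ≠ 0 → code b ≤ code β

lemma exists_isInit {a : (ι → ℕ) → ℝ} {β₀ : ι → ℕ} (h : a β₀ ≠ 0) : ∃ b, IsInit a b := by
  obtain ⟨b, hb, hmin⟩ := (measure code).wf.has_min {β | a β ≠ 0} ⟨β₀, h⟩
  exact ⟨b, hb, fun β hβ => not_lt.1 (hmin β hβ)⟩

lemma L1.exists_of_abs_le {K : Type*} (g : L1 K) {f : K → ℝ} {c : ℝ}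
    (hf : ∀ k, |f k| ≤ c * |g k|) : ∃ h : L1 K, ⇑h = f ∧ ‖h‖ ≤ c * ‖g‖ := by
  have hsum : Summable fun k => |f k| :=
    Summable.of_nonneg_of_le (fun _ => abs_nonneg _) hf ((summable_abs g).mul_left c)
  refine ⟨⟨f, memℓp_gen (by simpa using hsum)⟩, rfl, ?_⟩
  rw [norm_eq_tsum_abs, norm_eq_tsum_abs, ← tsum_mul_left]
  exact hsum.tsum_le_tsum hf ((summable_abs g).mul_left c)

open scoped Classical in
lemma IsInit.abs_tail_le {a : (ι → ℕ) → ℝ} {b : ι → ℕ} (hb : IsInit a b) (β : ι → ℕ) (k : ℕ) :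
    |if β = b then 0 else a β / a b * ((code b : ℝ) / code β) ^ k| ≤
      ((code b : ℝ) / (code b + 1)) ^ k / |a b| * |a β| := by
  split_ifs with h
  · rw [abs_zero]; positivity
  by_cases h0 : a β = 0
  · simp [h0]
  have hlt : (code b : ℝ) + 1 ≤ code β := by
    exact_mod_cast lt_of_le_of_ne (hb.2 β h0) fun h' => h (code_injective h').symm
  calc |a β / a b * ((code b : ℝ) / code β) ^ k|
      = ((code b : ℝ) / code β) ^ k / |a b| * |a β| := by
        rw [abs_mul, abs_div, abs_of_nonneg (by positivity : (0 : ℝ) ≤ (code b / code β) ^ k)]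
        ring
    _ ≤ ((code b : ℝ) / (code b + 1)) ^ k / |a b| * |a β| := by gcongr

lemma L1.eventually_exists_normalization {g : L1 (ι → ℕ)} {b : ι → ℕ} (hb : IsInit g b) :
    ∀ᶠ k : ℕ in atTop, ∃ h : L1 (ι → ℕ), ‖h‖ ≤ 1 / 2 ∧
      (fun β => g β * mon β (rad k)) = ⇑((g b * mon b (rad k)) • (basis b + h)) := by
  classical
  have hsmall : Tendsto (fun k => ((code b : ℝ) / (code b + 1)) ^ k / |g b| * ‖g‖) atTop (𝓝 0) := by
    have := tendsto_pow_atTop_nhds_zero_of_lt_one (r := (code b : ℝ) / (code b + 1))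
      (by positivity) ((div_lt_one (by positivity)).2 (lt_add_one _))
    simpa using (this.div_const |g b|).mul_const ‖g‖
  filter_upwards [hsmall.eventually_le_const one_half_pos] with k hk
  obtain ⟨h, hcoe, hle⟩ := exists_of_abs_le g fun β => hb.abs_tail_le β k
  refine ⟨h, hle.trans hk, funext fun β => ?_⟩
  simp only [lp.coeFn_smul, lp.coeFn_add, Pi.smul_apply, Pi.add_apply, smul_eq_mul, hcoe]
  by_cases hβ : β = b
  · simp [hβ, basis_apply_self]
  · have hcb : (code b : ℝ) ≠ 0 := by exact_mod_cast (code_pos b).ne'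
    have hcβ : (code β : ℝ) ≠ 0 := by exact_mod_cast (code_pos β).ne'
    have hgb : g b ≠ 0 := hb.1
    rw [basis_apply_of_ne hβ, if_neg hβ, mon_rad, mon_rad, inv_pow, inv_pow, div_pow]
    field_simp
    ring

/-- Close to the origin along the curve `rad`, the initial monomial dominates. -/
theorem IsInit.eventually_exists_normalization {a : (ι → ℕ) → ℝ} {b : ι → ℕ} (hb : IsInit a b)
    (ha : Conv a) : ∀ᶠ σ in atTop, ∃ h : L1 (ι → ℕ), ‖h‖ ≤ 1 / 2 ∧
      ∀ z : ι → ℝ, (∀ i, |z i| ≤ 1) →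
        psum a (rad σ * z) = a b * mon b (rad σ) * (mon b z + psum h z) := by
  obtain ⟨τ, hτ⟩ := (tendsto_rad.eventually ha.eventually_summable).exists
  have hg : ∀ β, L1.ofSummable hτ β = a β * mon β (rad τ) := fun _ => rfl
  have hgb : IsInit (L1.ofSummable hτ) b := by
    simpa only [IsInit, hg, mul_ne_zero_iff, (mon_rad_pos _ τ).ne', ne_eq, not_false_eq_true,
      and_true] using hb
  filter_upwards [(tendsto_sub_atTop_nat τ).eventually (L1.eventually_exists_normalization hgb),
    eventually_ge_atTop τ] with σ ⟨h, hh, hcoe⟩ hτσ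
  have hmon : ∀ β, a β * mon β (rad σ) = a β * mon β (rad τ) * mon β (rad (σ - τ)) := fun β => by
    rw [mul_assoc, ← mon_mul, ← rad_add, Nat.add_sub_cancel' hτσ]
  refine ⟨h, hh, fun z hz => ?_⟩
  calc psum a (rad σ * z)
      = psum (fun β => L1.ofSummable hτ β * mon β (rad (σ - τ))) z := by
        simp only [psum_mul, hmon, hg]
    _ = L1.eval z hz ((a b * mon b (rad σ)) • (L1.basis b + h)) := by
        rw [hcoe, L1.eval_apply, hmon, hg]
    _ = a b * mon b (rad σ) * (mon b z + psum h z) := by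
        rw [map_smul, map_add, L1.eval_basis, L1.eval_apply, smul_eq_mul]

lemma IsInit.eventually_le_abs_psum {a : (ι → ℕ) → ℝ} {b : ι → ℕ} (hb : IsInit a b)
    (ha : Conv a) : ∀ᶠ σ in atTop, |a b| / 2 * mon b (rad σ) ≤ |psum a (rad σ)| := by
  filter_upwards [hb.eventually_exists_normalization ha] with σ ⟨h, hh, hpsum⟩
  have hone : ∀ i : ι, |(1 : ι → ℝ) i| ≤ 1 := fun i => by simp
  have hge : (1 / 2 : ℝ) ≤ |1 + psum h 1| := by
    have := (abs_le.1 ((L1.abs_psum_le_norm hone h).trans hh)).1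
    exact le_trans (by linarith) (le_abs_self _)
  calc |a b| / 2 * mon b (rad σ) = |a b * mon b (rad σ)| * (1 / 2) := by
        rw [abs_mul, abs_of_pos (mon_rad_pos b σ)]; ring
    _ ≤ |a b * mon b (rad σ)| * |1 + psum h 1| := by gcongr
    _ = |psum a (rad σ)| := by
        rw [← abs_mul, ← mul_one (rad σ), hpsum 1 hone, mul_one]
        simp [mon]

end PrimeWeights

section Division

variable {ι κ : Type*}

open scoped Classical in
/-- Some index `k` such that the exponent `b k` divides `β`, if there is one. -/
def divisor (b : κ → ι → ℕ) (β : ι → ℕ) : Option κ :=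
  if h : ∃ k, b k ≤ β then some h.choose else none

lemma le_of_divisor_eq_some {b : κ → ι → ℕ} {β : ι → ℕ} {k : κ} (h : divisor b β = some k) :
    b k ≤ β := by
  unfold divisor at h
  split_ifs at h with hβ
  exact Option.some.inj h ▸ hβ.choose_spec

lemma divisor_ne_none {b : κ → ι → ℕ} {β : ι → ℕ} (h : ∃ k, b k ≤ β) : divisor b β ≠ none := by
  simp [divisor, h]

namespace L1

/-- Multiplication by the monomial `z ^ γ` on absolutely summable power series. -/
def shift (γ : ι → ℕ) : L1 (ι → ℕ) →L[ℝ] L1 (ι → ℕ) :=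
  lift (fun β => basis (β + γ)) fun _ => (norm_basis _).le

lemma norm_shift_apply_le (γ : ι → ℕ) (g : L1 (ι → ℕ)) : ‖shift γ g‖ ≤ ‖g‖ := by
  simpa using (shift γ).le_of_opNorm_le (norm_lift_le _ zero_le_one _) g

lemma norm_quotientBasis_le [DecidableEq κ] (b : κ → ι → ℕ) (k : κ) (β : ι → ℕ) :
    ‖if divisor b β = some k then basis (β - b k) else (0 : L1 (ι → ℕ))‖ ≤ 1 := by
  split_ifs <;> simp [norm_basis]

lemma norm_remainderBasis_le (b : κ → ι → ℕ) (β : ι → ℕ) :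
    ‖if divisor b β = none then basis β else (0 : L1 (ι → ℕ))‖ ≤ 1 := by
  split_ifs <;> simp [norm_basis]

open scoped Classical in
/-- The `k`-th quotient in the division by the monomials `z ^ b k`. -/
def quotient (b : κ → ι → ℕ) (k : κ) : L1 (ι → ℕ) →L[ℝ] L1 (ι → ℕ) :=
  lift _ (norm_quotientBasis_le b k)

/-- The remainder in the division by the monomials `z ^ b k`. -/
def remainder (b : κ → ι → ℕ) : L1 (ι → ℕ) →L[ℝ] L1 (ι → ℕ) :=
  lift _ (norm_remainderBasis_le b)

lemma remainder_apply_eq_zero {b : κ → ι → ℕ} {β : ι → ℕ} (hβ : ∃ k, b k ≤ β) (g : L1 (ι → ℕ)) :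
    remainder b g β = 0 := by
  have h0 : (lp.evalCLM ℝ (fun _ : ι → ℕ => ℝ) 1 β).comp (remainder b) = 0 := by
    refine hom_ext fun β' => ?_
    change remainder b (basis β') β = 0
    rw [remainder, lift_basis]
    split_ifs with h
    · refine basis_apply_of_ne ?_
      rintro rfl
      exact divisor_ne_none hβ h
    · rfl
  exact DFunLike.congr_fun h0 g

lemma norm_correctionBasis_le {b : κ → ι → ℕ} {h : κ → L1 (ι → ℕ)} {c : ℝ} (hc : 0 ≤ c)
    (hh : ∀ k, ‖h k‖ ≤ c) (β : ι → ℕ) :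
    ‖(divisor b β).elim 0 fun k => shift (β - b k) (h k)‖ ≤ c := by
  cases divisor b β with
  | none => simpa using hc
  | some k => exact (norm_shift_apply_le _ _).trans (hh k)

/-- The error committed when the quotients by the monomials `z ^ b k` are multiplied by
`z ^ b k + h k` in place of `z ^ b k`. -/
def correction (b : κ → ι → ℕ) {h : κ → L1 (ι → ℕ)} {c : ℝ} (hc : 0 ≤ c)
    (hh : ∀ k, ‖h k‖ ≤ c) : L1 (ι → ℕ) →L[ℝ] L1 (ι → ℕ) :=
  lift _ (norm_correctionBasis_le (b := b) hc hh)

variable [Fintype ι]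

lemma eval_shift (γ : ι → ℕ) (g : L1 (ι → ℕ)) {z : ι → ℝ} (hz : ∀ i, |z i| ≤ 1) :
    eval z hz (shift γ g) = mon γ z * eval z hz g := by
  have : (eval z hz).comp (shift γ) = mon γ z • eval z hz := hom_ext fun β => by
    simp only [ContinuousLinearMap.comp_apply, shift, lift_basis, eval_basis, smul_apply,
      smul_eq_mul, mon_add, mul_comm]
  exact DFunLike.congr_fun this g

variable [Fintype κ]

lemma eval_one_add_correction (b : κ → ι → ℕ) {h : κ → L1 (ι → ℕ)} {c : ℝ} (hc : 0 ≤ c)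
    (hh : ∀ k, ‖h k‖ ≤ c) {z : ι → ℝ} (hz : ∀ i, |z i| ≤ 1) (g : L1 (ι → ℕ)) :
    eval z hz (g + correction b hc hh g) =
      ∑ k, (mon (b k) z + eval z hz (h k)) * eval z hz (quotient b k g) +
        eval z hz (remainder b g) := by
  classical
  have : (eval z hz).comp (1 + correction b hc hh) =
      ∑ k, (mon (b k) z + eval z hz (h k)) • (eval z hz).comp (quotient b k) +
        (eval z hz).comp (remainder b) := by
    refine hom_ext fun β => ?_
    simp only [ContinuousLinearMap.comp_apply, add_apply, sum_apply, smul_apply, smul_eq_mul,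
      one_apply_eq_self, map_add, correction, quotient, remainder, lift_basis, eval_basis]
    rcases hd : divisor b β with _ | k
    · simp [eval_basis]
    · have hmon : mon (b k) z * mon (β - b k) z = mon β z := by
        rw [← mon_add, add_tsub_cancel_of_le (le_of_divisor_eq_some hd)]
      rw [Finset.sum_eq_single k (fun j _ hj => by simp [hj.symm]) (by simp)]
      simp only [Option.elim_some, if_true, eval_shift, eval_basis, ← hmon, reduceCtorEq, if_false,
        map_zero]
      ring
  simpa using DFunLike.congr_fun this g

/-- Solved by a Neumann series, the correction having norm at most `c < 1`. -/
theorem exists_division (b : κ → ι → ℕ) {h : κ → L1 (ι → ℕ)} {c : ℝ} (hc : 0 ≤ c) (hc1 : c < 1)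
    (hh : ∀ k, ‖h k‖ ≤ c) (w : L1 (ι → ℕ)) :
    ∃ (q : κ → L1 (ι → ℕ)) (r : L1 (ι → ℕ)), (∀ β, (∃ k, b k ≤ β) → r β = 0) ∧
      ∀ z : ι → ℝ, (∀ i, |z i| ≤ 1) →
        psum w z = ∑ k, (mon (b k) z + psum (h k) z) * psum (q k) z + psum r z := by
  have hnorm : ‖-correction b hc hh‖ < 1 := by
    rw [norm_neg]
    exact (norm_lift_le _ hc _).trans_lt hc1
  obtain ⟨S, hS⟩ := (isUnit_one_sub_of_norm_lt_one hnorm).exists_right_inv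
  have hg : S w + correction b hc hh (S w) = w := by
    simpa [sub_neg_eq_add] using DFunLike.congr_fun hS w
  refine ⟨fun k => quotient b k (S w), remainder b (S w),
    fun β hβ => remainder_apply_eq_zero hβ _, fun z hz => ?_⟩
  simpa only [hg, eval_apply] using eval_one_add_correction b hc hh hz (S w)

end L1

lemma mul_div_rad [Fintype ι] (σ : ℕ) (y : ι → ℝ) : rad σ * (y / rad σ) = y :=
  funext fun i => mul_div_cancel₀ (y i) (rad_pos σ i).ne'

theorem exists_local_division [Fintype ι] [Fintype κ] {a : κ → (ι → ℕ) → ℝ} {b : κ → ι → ℕ}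
    (ha : ∀ k, Conv (a k)) (hb : ∀ k, IsInit (a k) (b k)) {w : (ι → ℕ) → ℝ} (hw : Conv w) :
    ∃ (Q : κ → (ι → ℝ) → ℝ) (r : (ι → ℕ) → ℝ), (∀ k, AnalyticAt ℝ (Q k) 0) ∧ Conv r ∧
      (∀ β, (∃ k, b k ≤ β) → r β = 0) ∧
      psum w =ᶠ[𝓝 0] fun y => ∑ k, Q k y * psum (a k) y + psum r y := by
  obtain ⟨σ, hwσ, hσ⟩ := ((tendsto_rad.eventually hw.eventually_summable).and
    (eventually_all.2 fun k => (hb k).eventually_exists_normalization (ha k))).exists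
  choose h hh hpsum using hσ
  obtain ⟨q, r, hr, hdiv⟩ := L1.exists_division b one_half_pos.le one_half_lt_one hh
    (L1.ofSummable hwσ)
  refine ⟨fun k y => psum (fun β => q k β / mon β (rad σ)) y / (a k (b k) * mon (b k) (rad σ)),
    fun β => r β / mon β (rad σ),
    fun k => (L1.conv_div_mon _ (rad_pos σ)).analyticAt_psum.div_const,
    L1.conv_div_mon _ (rad_pos σ), fun β hβ => by simp only [hr β hβ, zero_div], ?_⟩
  filter_upwards [eventually_abs_le (rad_pos σ)] with y hy
  have hz : ∀ i, |(y / rad σ : ι → ℝ) i| ≤ 1 := fun i => by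
    rw [Pi.div_apply, abs_div, abs_of_pos (rad_pos σ i)]
    exact div_le_one_of_le₀ (hy i) (rad_pos σ i).le
  calc psum w y = psum (L1.ofSummable hwσ) (y / rad σ) := by
        conv_lhs => rw [← mul_div_rad σ y]
        exact psum_mul w _ _
    _ = _ := hdiv _ hz
    _ = _ := by
        simp only [psum_div_mon]
        refine congrArg (· + _) (Finset.sum_congr rfl fun k _ => ?_)
        have ha₀ := (hb k).1
        have hmon := (mon_rad_pos (b k) σ).ne'
        conv_rhs => rw [← mul_div_rad σ y, hpsum k _ hz, mul_div_rad σ y]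
        field_simp

end Division

section GermIdeals

variable {ι κ : Type*}

/-- Germs at the origin of real functions. -/
abbrev Germ₀ (ι : Type*) := Germ (𝓝 (0 : ι → ℝ)) ℝ

/-- The germ at the origin of a function. -/
def germ : ((ι → ℝ) → ℝ) →+* Germ₀ ι := Germ.coeRingHom (𝓝 0)

lemma germ_eq_germ {f g : (ι → ℝ) → ℝ} : germ f = germ g ↔ f =ᶠ[𝓝 0] g := Germ.coe_eq

variable [Fintype ι]

/-- The ring of germs at the origin of real analytic functions. -/
def analyticGerms (ι : Type*) [Fintype ι] : Subring (Germ₀ ι) where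
  carrier := germ '' {f | AnalyticAt ℝ f 0}
  mul_mem' := by
    rintro _ _ ⟨f, hf, rfl⟩ ⟨g, hg, rfl⟩
    exact ⟨f * g, hf.mul hg, map_mul germ f g⟩
  one_mem' := ⟨1, analyticAt_const, map_one germ⟩
  add_mem' := by
    rintro _ _ ⟨f, hf, rfl⟩ ⟨g, hg, rfl⟩
    exact ⟨f + g, hf.add hg, map_add germ f g⟩
  zero_mem' := ⟨0, analyticAt_const, map_zero germ⟩
  neg_mem' := by
    rintro _ ⟨f, hf, rfl⟩
    exact ⟨-f, hf.neg, map_neg germ f⟩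

lemma germ_mul_mem {J : Submodule (analyticGerms ι) (Germ₀ ι)} {f g : (ι → ℝ) → ℝ}
    (hf : AnalyticAt ℝ f 0) (hg : germ g ∈ J) : germ (f * g) ∈ J := by
  rw [map_mul]
  exact J.smul_mem (⟨germ f, f, hf, rfl⟩ : analyticGerms ι) hg

lemma exists_finset_sum_of_germ_mem_span {g : κ → (ι → ℝ) → ℝ} {F : (ι → ℝ) → ℝ}
    (h : germ F ∈ Submodule.span (analyticGerms ι) (range fun k => germ (g k))) :
    ∃ (A : Finset κ) (c : κ → (ι → ℝ) → ℝ), (∀ k, AnalyticAt ℝ (c k) 0) ∧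
      F =ᶠ[𝓝 0] ∑ k ∈ A, c k * g k := by
  obtain ⟨C, hC⟩ := Finsupp.mem_span_range_iff_exists_finsupp.1 h
  choose c hc hcC using fun k => (C k).2
  refine ⟨C.support, c, hc, germ_eq_germ.1 ?_⟩
  simp only [← hC, map_sum, map_mul, hcC]
  rfl

lemma exists_finset_generating {σ : Type*} [Finite σ] (I : Set (σ → ℕ)) :
    ∃ B : Finset (σ → ℕ), ↑B ⊆ I ∧ ∀ β ∈ I, ∃ b ∈ B, b ≤ β := by
  have hfin : {b | Minimal (· ∈ I) b}.Finite :=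
    WellQuasiOrderedLE.finite_of_isAntichain (setOfPred_minimal_antichain _)
  refine ⟨hfin.toFinset, fun b hb => (hfin.mem_toFinset.1 hb).prop, fun β hβ => ?_⟩
  obtain ⟨b, hbβ, hb⟩ := exists_minimal_le_of_wellFoundedLT (· ∈ I) β hβ
  exact ⟨b, hfin.mem_toFinset.2 hb, hbβ⟩

/-- The initial exponents of the elements of an ideal of germs. -/
def initExponents (J : Submodule (analyticGerms ι) (Germ₀ ι)) : Set (ι → ℕ) :=
  {b | ∃ a, Conv a ∧ IsInit a b ∧ germ (psum a) ∈ J}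

theorem exists_remainder_mod (J : Submodule (analyticGerms ι) (Germ₀ ι))
    {w : (ι → ℕ) → ℝ} (hw : Conv w) :
    ∃ r, Conv r ∧ (∀ b ∈ initExponents J, r b = 0) ∧
      germ (psum w - psum r) ∈ J := by
  obtain ⟨B, hBJ, hB⟩ := exists_finset_generating (initExponents J)
  choose a ha hab haJ using fun b : B => hBJ b.2
  obtain ⟨Q, r, hQ, hr, hr0, hdiv⟩ := exists_local_division ha hab hw
  refine ⟨r, hr, fun β hβ => ?_, ?_⟩
  · obtain ⟨b, hbB, hbβ⟩ := hB β hβ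
    exact hr0 β ⟨⟨b, hbB⟩, hbβ⟩
  · have hsum : psum w - psum r =ᶠ[𝓝 0] ∑ b, Q b * psum (a b) := by
      filter_upwards [hdiv] with z hz
      simp [hz, Finset.sum_apply]
    rw [germ_eq_germ.2 hsum, map_sum]
    exact J.sum_mem fun b _ => germ_mul_mem (hQ b) (haJ b)

theorem germ_psum_mem_of_forall_finset
    (J : Submodule (analyticGerms ι) (Germ₀ ι)) {w : (ι → ℕ) → ℝ} (hw : Conv w)
    (H : ∀ B : Finset (ι → ℕ), ∃ s, Conv s ∧ (∀ β ∈ B, s β = w β) ∧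
      germ (psum s) ∈ J) :
    germ (psum w) ∈ J := by
  obtain ⟨r, hr, hr0, hJ⟩ := exists_remainder_mod J hw
  suffices h : r = 0 by
    have hzero : psum r = 0 := funext fun z => by simp [psum, h]
    simpa [hzero] using hJ
  by_contra hne
  obtain ⟨β₀, hβ₀⟩ := Function.ne_iff.1 hne
  obtain ⟨b, hb⟩ := exists_isInit hβ₀
  have hfin : {β : ι → ℕ | code β ≤ code b}.Finite :=
    (Set.finite_le_nat (code b)).preimage code_injective.injOn
  obtain ⟨s, hs, hsw, hsJ⟩ := H hfin.toFinset
  replace hsw : ∀ β, code β ≤ code b → s β = w β := fun β hβ => hsw β (hfin.mem_toFinset.2 hβ)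
  refine hb.1 (hr0 b ⟨s - (w - r), hs.sub (hw.sub hr), ⟨?_, fun β hβ => ?_⟩, ?_⟩)
  · simpa [hsw b le_rfl] using hb.1
  · by_contra! hlt
    refine hlt.not_ge (hb.2 β ?_)
    simpa [hsw β hlt.le] using hβ
  · have heq : psum (s - (w - r)) =ᶠ[𝓝 0] psum s - (psum w - psum r) :=
      (psum_sub hs (hw.sub hr)).trans (EventuallyEq.rfl.sub (psum_sub hw hr))
    rw [germ_eq_germ.2 heq, map_sub]
    exact J.sub_mem hsJ hJ

end GermIdeals

section AsymptoticExpansions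

variable {ι : Type*} [Fintype ι]

lemma Conv.indicator {a : (ι → ℕ) → ℝ} (ha : Conv a) (S : Set (ι → ℕ)) : Conv (S.indicator a) := by
  obtain ⟨r, hr, hs⟩ := ha
  exact ⟨r, hr, (hs.indicator S).congr fun β => indicator_mul_left S _ _⟩

lemma conv_indicator_finset (S : Finset (ι → ℕ)) (a : (ι → ℕ) → ℝ) :
    Conv ((S : Set (ι → ℕ)).indicator a) :=
  ⟨1, fun _ => one_pos, summable_of_ne_finset_zero (s := S) fun β hβ => by simp [hβ]⟩

lemma psum_indicator_finset (S : Finset (ι → ℕ)) (a : (ι → ℕ) → ℝ) (z : ι → ℝ) :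
    psum ((S : Set (ι → ℕ)).indicator a) z = ∑ β ∈ S, a β * mon β z := by
  simpa only [psum, indicator_mul_left] using
    (sum_eq_tsum_indicator (fun β => a β * mon β z) S).symm

lemma mem_multiIdxLt {N M : ℕ} {α : Fin N → ℕ} : α ∈ multiIdxLt N M ↔ ∑ i, α i < M := by
  simp only [multiIdxLt, trunc, Finset.mem_filter, Finset.mem_image, Finset.mem_univ, true_and,
    and_iff_right_iff_imp]
  intro h
  refine ⟨fun i => ⟨α i, ?_⟩, rfl⟩
  have := Finset.single_le_sum (f := α) (fun _ _ => Nat.zero_le _) (Finset.mem_univ i)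
  omega

lemma abs_mon_le_of_le_sum {β : ι → ℕ} {M : ℕ} (hM : M ≤ ∑ i, β i) {T : ℝ} (hT : 0 < T)
    {z : ι → ℝ} (hz : ‖z‖ ≤ T) : |mon β z| ≤ mon β (fun _ => T) * (‖z‖ / T) ^ M := by
  calc |mon β z| ≤ mon β fun _ => ‖z‖ := abs_mon_le_mon β (norm_le_pi_norm z)
    _ = mon β (fun _ => T) * (‖z‖ / T) ^ ∑ i, β i := by
        simp only [mon, Finset.prod_pow_eq_pow_sum, ← mul_pow, mul_div_cancel₀ _ hT.ne']
    _ ≤ mon β (fun _ => T) * (‖z‖ / T) ^ M :=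
        mul_le_mul_of_nonneg_left
          (pow_le_pow_of_le_one (by positivity) ((div_le_one hT).2 hz) hM)
          (mon_pos β fun _ => hT).le

lemma Conv.psum_isBigO {a : (ι → ℕ) → ℝ} (ha : Conv a) {M : ℕ}
    (h0 : ∀ β, ∑ i, β i < M → a β = 0) :
    psum a =O[𝓝 0] fun z : ι → ℝ => ‖z‖ ^ M := by
  obtain ⟨T, hsum, hT⟩ : ∃ T : ℝ, (Summable fun β => a β * mon β fun _ => T) ∧ 0 < T := by
    have hconst : Tendsto (fun (T : ℝ) (_ : ι) => T) (𝓝[>] 0) (𝓝 0) :=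
      ((continuous_pi fun _ => continuous_id).tendsto' 0 0 rfl).mono_left nhdsWithin_le_nhds
    exact ((hconst.eventually ha.eventually_summable).and self_mem_nhdsWithin).exists
  refine Asymptotics.IsBigO.of_bound ((∑' β, |a β * mon β fun _ => T|) / T ^ M) ?_
  filter_upwards [closedBall_mem_nhds (0 : ι → ℝ) hT] with z hz
  have hle : ∀ β, ‖a β * mon β z‖ ≤ |a β * mon β fun _ => T| * (‖z‖ / T) ^ M := fun β => by
    rcases lt_or_ge (∑ i, β i) M with h | h
    · simp [h0 β h]
    · rw [norm_mul, abs_mul, abs_of_pos (mon_pos β fun _ => hT), mul_assoc]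
      exact mul_le_mul_of_nonneg_left
        (abs_mon_le_of_le_sum h hT (mem_closedBall_zero_iff.1 hz)) (abs_nonneg _)
  calc ‖psum a z‖ ≤ ∑' β, |a β * mon β fun _ => T| * (‖z‖ / T) ^ M :=
        tsum_of_norm_bounded (hsum.abs.mul_right _).hasSum hle
    _ = (∑' β, |a β * mon β fun _ => T|) / T ^ M * ‖‖z‖ ^ M‖ := by
        rw [tsum_mul_right, div_pow, norm_pow, norm_norm]
        ring

variable {N : ℕ}

/-- `∑ c α * v ^ α` is the asymptotic expansion of `F` at the origin, to infinite order. -/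
def HasAsympExpansion (F : (Fin N → ℝ) → ℝ) (c : (Fin N → ℕ) → ℝ) : Prop :=
  ∀ M : ℕ, (fun v => F v - ∑ α ∈ multiIdxLt N M, c α * mon α v) =O[𝓝 0] fun v => ‖v‖ ^ M

lemma HasAsympExpansion.congr {F G : (Fin N → ℝ) → ℝ} {c : (Fin N → ℕ) → ℝ}
    (h : HasAsympExpansion F c) (hFG : F =ᶠ[𝓝 0] G) : HasAsympExpansion G c := fun M =>
  (h M).congr' (hFG.sub EventuallyEq.rfl) EventuallyEq.rfl

lemma HasAsympExpansion.sum_const_mul {κ : Type*} {S : Finset κ} {F : κ → (Fin N → ℝ) → ℝ}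
    {c : κ → (Fin N → ℕ) → ℝ} (y : κ → ℝ) (h : ∀ k ∈ S, HasAsympExpansion (F k) (c k)) :
    HasAsympExpansion (fun v => ∑ k ∈ S, y k * F k v) (fun α => ∑ k ∈ S, y k * c k α) := fun M => by
  refine (Asymptotics.IsBigO.sum fun k hk => (h k hk M).const_mul_left (y k)).congr_left fun v => ?_
  simp only [Finset.sum_apply, mul_sub, Finset.sum_sub_distrib, Finset.mul_sum, Finset.sum_mul,
    mul_assoc]
  rw [Finset.sum_comm]

theorem Conv.hasAsympExpansion_psum {a : (Fin N → ℕ) → ℝ} (ha : Conv a) :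
    HasAsympExpansion (psum a) a := fun M => by
  have hfin := conv_indicator_finset (multiIdxLt N M) a
  refine ((ha.sub hfin).psum_isBigO (M := M) fun α hα => ?_).congr' ?_ EventuallyEq.rfl
  · simp [mem_multiIdxLt.2 hα]
  · filter_upwards [psum_sub ha hfin] with v hv
    rw [hv, Pi.sub_apply, psum_indicator_finset]

lemma norm_rad_le (σ : ℕ) : ‖(rad σ : ι → ℝ)‖ ≤ (1 / 2) ^ σ :=
  (pi_norm_le_iff_of_nonneg (by positivity)).2 fun i => by
    rw [Real.norm_of_nonneg (rad_pos σ i).le]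
    exact rad_le σ i

lemma IsInit.not_isBigO {a : (ι → ℕ) → ℝ} {b : ι → ℕ} (hb : IsInit a b) (ha : Conv a) {M : ℕ}
    (hM : code b ≤ M) : ¬ psum a =O[𝓝 0] fun z : ι → ℝ => ‖z‖ ^ M := fun h => by
  have hlow : (fun σ : ℕ => ((code b : ℝ)⁻¹) ^ σ) =O[atTop] fun σ => psum a (rad σ) := by
    refine Asymptotics.IsBigO.of_bound (2 / |a b|) ?_
    filter_upwards [hb.eventually_le_abs_psum ha] with σ hσ
    have hab : 0 < |a b| := abs_pos.2 hb.1
    rw [← mon_rad, Real.norm_of_nonneg (mon_rad_pos b σ).le, Real.norm_eq_abs,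
      div_mul_eq_mul_div, le_div_iff₀ hab]
    linarith
  have hup : (fun σ : ℕ => psum a (rad σ)) =O[atTop] fun σ => (((2 : ℝ) ^ M)⁻¹) ^ σ := by
    refine (h.comp_tendsto tendsto_rad).trans (Asymptotics.IsBigO.of_norm_le fun σ => ?_)
    rw [Function.comp_apply, norm_pow, norm_norm]
    calc ‖(rad σ : ι → ℝ)‖ ^ M ≤ ((1 / 2) ^ σ) ^ M := by gcongr; exact norm_rad_le σ
      _ = (((2 : ℝ) ^ M)⁻¹) ^ σ := by rw [pow_right_comm, one_div, inv_pow]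
  have hlt : ((2 : ℝ) ^ M)⁻¹ < (code b : ℝ)⁻¹ :=
    inv_strictAnti₀ (by exact_mod_cast code_pos b) (by exact_mod_cast hM.trans_lt M.lt_two_pow_self)
  refine Asymptotics.isLittleO_irrefl (Frequently.of_forall fun σ => ?_)
    ((hlow.trans hup).trans_isLittleO (isLittleO_pow_pow_of_lt_left (by positivity) hlt))
  rw [← mon_rad]
  exact (mon_rad_pos b σ).ne'

theorem HasAsympExpansion.unique {F : (Fin N → ℝ) → ℝ} {c c' : (Fin N → ℕ) → ℝ}
    (h : HasAsympExpansion F c) (h' : HasAsympExpansion F c') : c = c' := by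
  by_contra hne
  obtain ⟨α, hα⟩ := Function.ne_iff.1 hne
  obtain ⟨b, hb⟩ := exists_isInit (a := c - c') (sub_ne_zero.2 hα)
  set M := code b + ∑ i, b i + 1
  have hbM : b ∈ multiIdxLt N M := mem_multiIdxLt.2 (by omega)
  have hinit : IsInit ((multiIdxLt N M : Set (Fin N → ℕ)).indicator (c - c')) b :=
    ⟨by simpa [hbM] using hb.1, fun β hβ => hb.2 β fun h0 => hβ (by simp [indicator, h0])⟩
  refine hinit.not_isBigO (conv_indicator_finset _ _) (M := M) (by omega)
    (((h' M).sub (h M)).congr_left fun v => ?_)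
  simp only [psum_indicator_finset, Pi.sub_apply, sub_mul, Finset.sum_sub_distrib]
  ring

end AsymptoticExpansions

section Splitting

variable {ι₁ ι₂ : Type*}

lemma eventually_sumElim {P : (ι₁ ⊕ ι₂ → ℝ) → Prop} (h : ∀ᶠ z in 𝓝 0, P z) :
    ∀ᶠ u in 𝓝 0, ∀ᶠ v in 𝓝 0, P (Sum.elim v u) := by
  have hcont : Continuous fun p : (ι₂ → ℝ) × (ι₁ → ℝ) => Sum.elim p.2 p.1 :=
    (Homeomorph.sumArrowHomeomorphProdArrow (X := ℝ)).symm.continuous.comp continuous_swap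
  exact ((hcont.tendsto' (0, 0) 0 Sum.elim_zero_zero).eventually h).curry_nhds

variable [Fintype ι₂]

/-- The coefficients in the first group of variables of a power series in two groups of
variables, at the value `u` of the second group. -/
def partialSum (a : (ι₁ ⊕ ι₂ → ℕ) → ℝ) (u : ι₂ → ℝ) (α : ι₁ → ℕ) : ℝ :=
  psum (fun β => a (Sum.elim α β)) u

lemma partialSum_indicator (a : (ι₁ ⊕ ι₂ → ℕ) → ℝ) (T : Set (ι₁ → ℕ)) (u : ι₂ → ℝ) :
    partialSum ({β | β ∘ Sum.inl ∈ T}.indicator a) u = T.indicator (partialSum a u) := by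
  ext α
  by_cases h : α ∈ T <;> simp [partialSum, psum, indicator, h]

variable [Fintype ι₁]

lemma mon_sumElim (α : ι₁ → ℕ) (β : ι₂ → ℕ) (v : ι₁ → ℝ) (u : ι₂ → ℝ) :
    mon (Sum.elim α β) (Sum.elim v u) = mon α v * mon β u := by
  simp [mon]

lemma term_sumElim (a : (ι₁ ⊕ ι₂ → ℕ) → ℝ) (v : ι₁ → ℝ) (u : ι₂ → ℝ)
    (p : (ι₁ → ℕ) × (ι₂ → ℕ)) :
    a ((Equiv.sumArrowEquivProdArrow ι₁ ι₂ ℕ).symm p) *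
      mon ((Equiv.sumArrowEquivProdArrow ι₁ ι₂ ℕ).symm p) (Sum.elim v u) =
    a (Sum.elim p.1 p.2) * mon p.2 u * mon p.1 v := by
  change a (Sum.elim p.1 p.2) * mon (Sum.elim p.1 p.2) _ = _
  rw [mon_sumElim]
  ring

variable {a : (ι₁ ⊕ ι₂ → ℕ) → ℝ}

lemma summable_prod {v : ι₁ → ℝ} {u : ι₂ → ℝ}
    (h : Summable fun β => a β * mon β (Sum.elim v u)) :
    Summable fun p : (ι₁ → ℕ) × (ι₂ → ℕ) => a (Sum.elim p.1 p.2) * mon p.2 u * mon p.1 v :=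
  ((Equiv.sumArrowEquivProdArrow ι₁ ι₂ ℕ).symm.summable_iff.2 h).congr (term_sumElim a v u)

lemma psum_sumElim {v : ι₁ → ℝ} {u : ι₂ → ℝ}
    (h : Summable fun β => a β * mon β (Sum.elim v u)) :
    psum a (Sum.elim v u) = psum (partialSum a u) v := calc
  psum a (Sum.elim v u)
      = ∑' p : (ι₁ → ℕ) × (ι₂ → ℕ), a (Sum.elim p.1 p.2) * mon p.2 u * mon p.1 v := by
        rw [psum, ← (Equiv.sumArrowEquivProdArrow ι₁ ι₂ ℕ).symm.tsum_eq]
        exact tsum_congr (term_sumElim a v u)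
  _ = ∑' α, ∑' β, a (Sum.elim α β) * mon β u * mon α v := (summable_prod h).tsum_prod
  _ = psum (partialSum a u) v := by simp only [tsum_mul_right, psum, partialSum]

lemma Conv.eventually_conv_partialSum (ha : Conv a) : ∀ᶠ u in 𝓝 0, Conv (partialSum a u) := by
  obtain ⟨r, hr, hs⟩ := ha
  filter_upwards [eventually_abs_le fun i => hr (Sum.inr i)] with u hu
  refine ⟨r ∘ Sum.inl, fun i => hr (Sum.inl i), ?_⟩
  have h := summable_mul_mon hs (z := Sum.elim (r ∘ Sum.inl) u) (by
    rintro (i | i)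
    exacts [(abs_of_pos (hr _)).le, hu i])
  refine (summable_prod h).prod.congr fun α => ?_
  simp only [tsum_mul_right, partialSum, psum]

end Splitting

section ParametricExpansions

variable {N : ℕ} {ι : Type*} [Fintype ι]

lemma eventually_partialSum_eq {f : (Fin N ⊕ ι → ℝ) → ℝ} {a : (Fin N ⊕ ι → ℕ) → ℝ}
    {g : (Fin N → ℕ) → (ι → ℝ) → ℝ} (ha : Conv a) (haf : psum a =ᶠ[𝓝 0] f)
    (hg : ∀ᶠ u in 𝓝 0, HasAsympExpansion (fun v => f (Sum.elim v u)) fun α => g α u) :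
    ∀ᶠ u in 𝓝 0, partialSum a u = fun α => g α u := by
  filter_upwards [ha.eventually_conv_partialSum, eventually_sumElim haf,
    eventually_sumElim ha.eventually_summable, hg] with u hconv hu hsum hgu
  refine (hconv.hasAsympExpansion_psum.congr ?_).unique hgu
  filter_upwards [hu, hsum] with v hv hs
  rw [← psum_sumElim hs, hv]

theorem exists_eq_sum_mon_mul {f : (Fin N ⊕ ι → ℝ) → ℝ} (hf : AnalyticAt ℝ f 0)
    {g : (Fin N → ℕ) → (ι → ℝ) → ℝ}
    (hg : ∀ᶠ u in 𝓝 0, HasAsympExpansion (fun v => f (Sum.elim v u)) fun α => g α u) :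
    ∃ (A : Finset (Fin N → ℕ)) (c : (Fin N → ℕ) → (Fin N ⊕ ι → ℝ) → ℝ),
      (∀ α, AnalyticAt ℝ (c α) 0) ∧
      ∀ᶠ z in 𝓝 0, f z = ∑ α ∈ A, c α z * (mon α (z ∘ Sum.inl) * g α (z ∘ Sum.inr)) := by
  classical
  obtain ⟨a, ha, haf⟩ := exists_conv_psum_eventuallyEq hf
  set F : (Fin N → ℕ) → (Fin N ⊕ ι → ℝ) → ℝ := fun α z => mon α (z ∘ Sum.inl) * g α (z ∘ Sum.inr)
  have hmem : germ (psum a) ∈ Submodule.span (analyticGerms (Fin N ⊕ ι))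
      (range fun α => germ (F α)) := by
    refine germ_psum_mem_of_forall_finset _ ha fun B => ?_
    set T : Finset (Fin N → ℕ) := B.image (· ∘ Sum.inl)
    set s := {β : Fin N ⊕ ι → ℕ | β ∘ Sum.inl ∈ (T : Set (Fin N → ℕ))}.indicator a
    have hs : Conv s := ha.indicator _
    have hcomp : Tendsto (fun z : Fin N ⊕ ι → ℝ => z ∘ Sum.inr) (𝓝 0) (𝓝 0) :=
      (by fun_prop : Continuous fun z : Fin N ⊕ ι → ℝ => z ∘ Sum.inr).tendsto' 0 0 rfl
    have hsF : psum s =ᶠ[𝓝 0] ∑ α ∈ T, F α := by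
      filter_upwards [hs.eventually_summable,
        hcomp.eventually (eventually_partialSum_eq ha haf hg)] with z hz hzg
      rw [← Sum.elim_comp_inl_inr z] at hz ⊢
      rw [psum_sumElim hz, partialSum_indicator, hzg, psum_indicator_finset, Finset.sum_apply]
      exact Finset.sum_congr rfl fun α _ => mul_comm _ _
    refine ⟨s, hs, fun β hβ => indicator_of_mem (s := {β | β ∘ Sum.inl ∈ (T : Set (Fin N → ℕ))})
      (Finset.mem_image_of_mem (· ∘ Sum.inl) hβ) a, ?_⟩
    rw [germ_eq_germ.2 hsF, map_sum]
    exact Submodule.sum_mem _ fun α _ => Submodule.subset_span ⟨α, rfl⟩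
  obtain ⟨A, c, hc, hAc⟩ := exists_finset_sum_of_germ_mem_span hmem
  refine ⟨A, c, hc, ?_⟩
  filter_upwards [haf, hAc] with z h1 h2
  rw [← h1, h2, Finset.sum_apply]
  rfl

end ParametricExpansions

section VectorExpansions

variable {N : ℕ} {ι κ : Type*}

lemma eq_sum_smul_of_eventually_dotProduct [Fintype κ] {β : Type*} {A : Finset β} {b : κ → ℝ}
    {c : β → (κ → ℝ) → ℝ} {G : β → κ → ℝ} (hc : ∀ α ∈ A, ContinuousAt (c α) 0)
    (h : ∀ᶠ y in 𝓝 0, y ⬝ᵥ b = ∑ α ∈ A, c α y * (y ⬝ᵥ G α)) : b = ∑ α ∈ A, c α 0 • G α := by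
  classical
  ext k
  have hline : Tendsto (fun s : ℝ => Pi.single k s) (𝓝[≠] 0) (𝓝 (0 : κ → ℝ)) :=
    ((continuous_single k).tendsto' 0 0 (Pi.single_zero k)).mono_left nhdsWithin_le_nhds
  have hlim : Tendsto (fun s : ℝ => ∑ α ∈ A, c α (Pi.single k s) * G α k) (𝓝[≠] 0)
      (𝓝 (∑ α ∈ A, c α 0 * G α k)) :=
    tendsto_finsetSum A fun α hα => ((hc α hα).tendsto.comp hline).mul_const _
  have heq : ∀ᶠ s : ℝ in 𝓝[≠] 0, ∑ α ∈ A, c α (Pi.single k s) * G α k = b k := by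
    filter_upwards [hline.eventually h, self_mem_nhdsWithin] with s hs hs0
    refine mul_left_cancel₀ (show s ≠ 0 from hs0) ?_
    simp only [single_dotProduct] at hs
    rw [hs, Finset.mul_sum]
    exact Finset.sum_congr rfl fun α _ => mul_left_comm _ _ _
  simpa using tendsto_nhds_unique (tendsto_const_nhds.congr' (EventuallyEq.symm heq)) hlim

/-- The point with coordinates `w` and dual variables `y`; the latter are grouped with the
parameters. -/
def withDual (w : Fin N ⊕ ι → ℝ) (y : κ → ℝ) : Fin N ⊕ (ι ⊕ κ) → ℝ :=
  Sum.elim (w ∘ Sum.inl) (Sum.elim (w ∘ Sum.inr) y)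

lemma continuous_withDual :
    Continuous fun p : (Fin N ⊕ ι → ℝ) × (κ → ℝ) => withDual p.1 p.2 := by
  refine continuous_pi ?_
  rintro (i | i | i) <;>
    simp only [withDual, Sum.elim_inl, Sum.elim_inr, Function.comp_apply] <;> fun_prop

lemma withDual_zero_zero : withDual (0 : Fin N ⊕ ι → ℝ) (0 : κ → ℝ) = 0 := by
  ext (i | i | i) <;> rfl

lemma analyticAt_withDual_zero [Fintype ι] [Fintype κ] :
    AnalyticAt ℝ (fun w : Fin N ⊕ ι → ℝ => withDual w (0 : κ → ℝ)) 0 := by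
  refine analyticAt_pi_iff.2 ?_
  rintro (i | i | _)
  exacts [analyticAt_eval (Sum.inl i) 0, analyticAt_eval (Sum.inr i) 0, analyticAt_const]

lemma withDual_comp_map (w : Fin N ⊕ ι → ℝ) (y : κ → ℝ) :
    withDual w y ∘ Sum.map id Sum.inl = w := by
  ext (i | i) <;> rfl

variable [Fintype ι] [Fintype κ]

theorem exists_eq_sum_mon_smul {F : (Fin N ⊕ ι → ℝ) → κ → ℝ} (hF : AnalyticAt ℝ F 0)
    {g : (Fin N → ℕ) → (ι → ℝ) → κ → ℝ}
    (hg : ∀ᶠ u in 𝓝 0, ∀ k, HasAsympExpansion (fun v => F (Sum.elim v u) k) fun α => g α u k) :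
    ∃ (A : Finset (Fin N → ℕ)) (c : (Fin N → ℕ) → (Fin N ⊕ ι → ℝ) → ℝ),
      (∀ α, AnalyticAt ℝ (c α) 0) ∧
      ∀ᶠ w in 𝓝 0, F w = ∑ α ∈ A, c α w • mon α (w ∘ Sum.inl) • g α (w ∘ Sum.inr) := by
  have hf : AnalyticAt ℝ (fun z : Fin N ⊕ (ι ⊕ κ) → ℝ =>
      (z ∘ Sum.inr ∘ Sum.inr) ⬝ᵥ F (z ∘ Sum.map id Sum.inl)) 0 :=
    Finset.univ.analyticAt_fun_sum fun k _ => (analyticAt_eval (Sum.inr (Sum.inr k)) 0).fun_mul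
      (analyticAt_pi_iff.1 (hF.comp_of_eq (g := F)
        (.pi fun i => analyticAt_eval (Sum.map id Sum.inl i) 0) rfl) k)
  have hfg : ∀ᶠ u : ι ⊕ κ → ℝ in 𝓝 0, HasAsympExpansion
      (fun v => (Sum.elim v u ∘ Sum.inr ∘ Sum.inr) ⬝ᵥ F (Sum.elim v u ∘ Sum.map id Sum.inl))
      fun α => (u ∘ Sum.inr) ⬝ᵥ g α (u ∘ Sum.inl) := by
    have hcomp : Tendsto (fun u : ι ⊕ κ → ℝ => u ∘ Sum.inl) (𝓝 0) (𝓝 0) :=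
      (by fun_prop : Continuous fun u : ι ⊕ κ → ℝ => u ∘ Sum.inl).tendsto' 0 0 rfl
    filter_upwards [hcomp.eventually hg] with u hu
    simp only [Sum.elim_comp_map, Function.comp_id]
    exact HasAsympExpansion.sum_const_mul (u ∘ Sum.inr) fun k _ => hu k
  obtain ⟨A, c, hc, hAc⟩ := exists_eq_sum_mon_mul hf hfg
  have hdual : Tendsto (fun p : (Fin N ⊕ ι → ℝ) × (κ → ℝ) => withDual p.1 p.2) (𝓝 (0, 0)) (𝓝 0) :=
    continuous_withDual.tendsto' _ _ withDual_zero_zero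
  have hdual₀ : Tendsto (fun w : Fin N ⊕ ι → ℝ => withDual w (0 : κ → ℝ)) (𝓝 0) (𝓝 0) :=
    continuous_withDual.along_fst.tendsto' _ _ withDual_zero_zero
  have hcont : ∀ᶠ w : Fin N ⊕ ι → ℝ in 𝓝 0, ∀ α ∈ A,
      ContinuousAt (fun y : κ → ℝ => c α (withDual w y)) 0 := by
    refine A.eventually_all.2 fun α _ => ?_
    filter_upwards [hdual₀.eventually (hc α).eventually_analyticAt] with w hw
    exact hw.continuousAt.comp (f := fun y : κ → ℝ => withDual w y)
      continuous_withDual.along_snd.continuousAt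
  refine ⟨A, fun α w => c α (withDual w 0), fun α => ?_, ?_⟩
  · exact (hc α).comp_of_eq analyticAt_withDual_zero withDual_zero_zero
  · filter_upwards [(hdual.eventually hAc).curry_nhds, hcont] with w hw hcw
    refine eq_sum_smul_of_eventually_dotProduct hcw ?_
    filter_upwards [hw] with y hy
    rw [withDual_comp_map] at hy
    simp only [dotProduct_smul]
    exact hy

end VectorExpansions

section FlowFields

variable {E F : Type*} [NormedAddCommGroup E] [NormedSpace ℝ E]
  [NormedAddCommGroup F] [NormedSpace ℝ F]

lemma hasDerivAt_smul_left {g : E × F → F} {t : E} {y : F} (hg : DifferentiableAt ℝ g (t, y)) :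
    HasDerivAt (fun ε : ℝ => g (ε • t, y)) (fderiv ℝ g (t, y) (t, 0)) 1 := by
  have hline : HasDerivAt (fun ε : ℝ => (ε • t, y)) (t, (0 : F)) 1 := by
    simpa using ((hasDerivAt_id (1 : ℝ)).smul_const t).prodMk (hasDerivAt_const 1 y)
  exact hg.hasFDerivAt.comp_hasDerivAt_of_eq 1 hline (by simp)

variable [CompleteSpace E] [CompleteSpace F]

open scoped ContDiff in
lemma exists_analyticAt_right_inverse {g : E → F → F}
    (hg : AnalyticAt ℝ (fun q : E × F => g q.1 q.2) 0) (h0 : ∀ᶠ y in 𝓝 (0 : F), g 0 y = y) :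
    ∃ G : E × F → F, AnalyticAt ℝ G 0 ∧ G 0 = 0 ∧ ∀ᶠ q : E × F in 𝓝 0, g q.1 (G q) = q.2 := by
  set Φ : (E × F) × F → F := fun p => g p.1.1 p.2 - p.1.2
  have hΦ : AnalyticAt ℝ Φ 0 := by
    have hpair : AnalyticAt ℝ (fun p : (E × F) × F => (p.1.1, p.2)) 0 :=
      (analyticAt_fst.fun_comp analyticAt_fst).prod analyticAt_snd
    exact (hg.comp_of_eq hpair rfl).fun_sub (analyticAt_snd.fun_comp analyticAt_fst)
  have hΦ0 : Φ 0 = 0 := by simpa [Φ] using h0.self_of_nhds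
  have hinr : fderiv ℝ Φ 0 ∘L .inr ℝ (E × F) F = .id ℝ F := by
    have h := HasFDerivAt.comp (f := ContinuousLinearMap.inr ℝ (E × F) F) (0 : F)
      hΦ.differentiableAt.hasFDerivAt (ContinuousLinearMap.inr ℝ (E × F) F).hasFDerivAt
    refine h.unique ((hasFDerivAt_id (0 : F)).congr_of_eventuallyEq ?_)
    filter_upwards [h0] with y hy
    simpa [Φ] using hy
  have hinv : (fderiv ℝ Φ 0 ∘L .inr ℝ (E × F) F).IsInvertible :=
    hinr ▸ ContinuousLinearMap.isInvertible_equiv (f := .refl ℝ F)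
  have hω : ContDiffAt ℝ ω Φ 0 := hΦ.contDiffAt
  refine ⟨hω.implicitFunction (by simp) hinv, (hω.contDiffAt_implicitFunction _ hinv).analyticAt,
    hω.implicitFunction_apply_self _ hinv, ?_⟩
  filter_upwards [hω.eventually_apply_implicitFunction (by simp) hinv] with q hq
  exact sub_eq_zero.1 (hq.trans hΦ0)

theorem IsWFor.analyticAt {N n : ℕ} {γ : Euc N → Euc n → Euc n} {ρ : ℝ} {U : Set (Euc n)}
    {W : Euc N → Euc n → Euc n} (hW : IsWFor γ ρ U W) (hρ : 0 < ρ) (hU : U ∈ 𝓝 (0 : Euc n))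
    (hγ : AnalyticAt ℝ (fun q : Euc N × Euc n => γ q.1 q.2) 0) (hγ0 : ∀ x ∈ U, γ 0 x = x) :
    AnalyticAt ℝ (fun q : Euc N × Euc n => W q.1 q.2) 0 := by
  obtain ⟨γinv, hinv, hder⟩ := hW
  obtain ⟨G, hG, hG0, hGγ⟩ := exists_analyticAt_right_inverse hγ (eventually_of_mem hU hγ0)
  set Γ : Euc N × Euc n → Euc n := fun q => γ q.1 q.2
  have hpair : AnalyticAt ℝ (fun q : Euc N × Euc n => (q.1, G q)) 0 := analyticAt_fst.prod hG
  have hpair0 : ((0 : Euc N × Euc n).1, G 0) = 0 := by rw [hG0]; rfl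
  have hfderiv : AnalyticAt ℝ (fun q : Euc N × Euc n => fderiv ℝ Γ (q.1, G q) (q.1, 0)) 0 :=
    ((ContinuousLinearMap.id ℝ (Euc N × Euc n →L[ℝ] Euc n)).analyticAt_bilinear _).fun_comp
      ((hγ.fderiv.fun_comp_of_eq hpair hpair0).prod (analyticAt_fst.prod analyticAt_const))
  have hpair_tendsto : Tendsto (fun q : Euc N × Euc n => (q.1, G q)) (𝓝 0) (𝓝 0) :=
    by simpa only [ContinuousAt, hpair0] using hpair.continuousAt
  have hG_tendsto : Tendsto G (𝓝 0) (𝓝 0) := hG0 ▸ hG.continuousAt.tendsto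
  refine hfderiv.congr ?_
  filter_upwards [continuous_fst.tendsto (0 : Euc N × Euc n) (ball_mem_nhds _ hρ),
    continuous_snd.tendsto (0 : Euc N × Euc n) hU, hG_tendsto hU, hGγ,
    hpair_tendsto.eventually hγ.eventually_analyticAt] with q ht hx hGU hγG hΓ
  have hγinv : γinv q.1 q.2 = G q := hγG ▸ (hinv q.1 ht (G q) hGU).2
  exact (hasDerivAt_smul_left hΓ.differentiableAt).unique (hγinv ▸ hder q.1 ht q.2 hx)

end FlowFields

section TaylorFields

variable {N n : ℕ} {W : Euc N → Euc n → Euc n} {U : Set (Euc n)} {X : (Fin N → ℕ) → VF n}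

lemma IsTaylorFieldOf.hasAsympExpansion (hX : IsTaylorFieldOf W U X) {x : Euc n} (hx : x ∈ U)
    (k : Fin n) :
    HasAsympExpansion (fun v => W (WithLp.toLp 2 v) x k) fun α => X α x k := fun M => by
  obtain ⟨C, ε, hε, hC⟩ := hX.2.2 M
  set L : (Fin N → ℝ) →L[ℝ] Euc N := (EuclideanSpace.equiv (Fin N) ℝ).symm.toContinuousLinearMap
  have hbound : (fun v => W (L v) x k - ∑ α ∈ multiIdxLt N M, X α x k * mon α v) =O[𝓝 0]
      fun v => ‖L v‖ ^ M := by
    refine Asymptotics.IsBigO.of_bound C ?_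
    filter_upwards [L.continuous.tendsto' 0 0 (map_zero L) (ball_mem_nhds _ hε)] with v hv
    have hcoord : W (L v) x k - ∑ α ∈ multiIdxLt N M, X α x k * mon α v =
        (W (L v) x - ∑ α ∈ multiIdxLt N M, monomial α (L v) • X α x) k := by
      simp only [PiLp.sub_apply, WithLp.ofLp_sum, Finset.sum_apply, PiLp.smul_apply, smul_eq_mul]
      exact congrArg (W (L v) x k - ·) (Finset.sum_congr rfl fun α _ => mul_comm _ _)
    rw [norm_pow, norm_norm, hcoord]
    exact (PiLp.norm_apply_le _ k).trans (hC (L v) hv x hx)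
  exact hbound.trans ((L.isBigO_id _).norm_norm.pow M)

/-- The identification of the coordinates `(v, u)` with a point `(t, x)` of the product of
Euclidean spaces. -/
def splitCoords (N n : ℕ) : (Fin N ⊕ Fin n → ℝ) ≃L[ℝ] Euc N × Euc n :=
  (ContinuousLinearEquiv.sumPiEquivProdPi ℝ (Fin N) (Fin n) fun _ => ℝ).trans
    ((EuclideanSpace.equiv (Fin N) ℝ).symm.prodCongr (EuclideanSpace.equiv (Fin n) ℝ).symm)

theorem IsTaylorFieldOf.exists_eq_sum_smul (hX : IsTaylorFieldOf W U X) (hU : U ∈ 𝓝 (0 : Euc n))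
    (hW : AnalyticAt ℝ (fun q : Euc N × Euc n => W q.1 q.2) 0) :
    ∃ (A : Finset (Fin N → ℕ)) (c : (Fin N → ℕ) → Euc N × Euc n → ℝ),
      (∀ α, AnalyticAt ℝ (c α) 0) ∧
      ∀ᶠ q in 𝓝 0, W q.1 q.2 = ∑ α ∈ A, (c α q * monomial α q.1) • X α q.2 := by
  set S := splitCoords N n
  have hF : AnalyticAt ℝ (fun w k => W (S w).1 (S w).2 k) 0 := by
    have := hW.comp_of_eq (S.analyticAt 0) (map_zero S)
    exact ((EuclideanSpace.equiv (Fin n) ℝ).analyticAt _).comp this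
  have hexp : ∀ᶠ u : Fin n → ℝ in 𝓝 0, ∀ k, HasAsympExpansion
      (fun v => W (S (Sum.elim v u)).1 (S (Sum.elim v u)).2 k)
      fun α => X α (WithLp.toLp 2 u) k := by
    have hlim : Tendsto (fun u : Fin n → ℝ => (WithLp.toLp 2 u : Euc n)) (𝓝 0) (𝓝 0) :=
      (EuclideanSpace.equiv (Fin n) ℝ).symm.continuous.tendsto' 0 0 (map_zero _)
    filter_upwards [hlim hU] with u hu k
    exact hX.hasAsympExpansion hu k
  obtain ⟨A, c, hc, hA⟩ := exists_eq_sum_mon_smul hF hexp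
  refine ⟨A, fun α q => c α (S.symm q),
    fun α => (hc α).comp_of_eq (S.symm.analyticAt 0) (map_zero _), ?_⟩
  filter_upwards [S.symm.continuous.tendsto' 0 0 (map_zero _) hA] with q hq
  ext k
  have hqk := congrFun hq k
  simp only [S.apply_symm_apply, Finset.sum_apply, Pi.smul_apply, smul_eq_mul] at hqk
  simp only [hqk, WithLp.ofLp_sum, Finset.sum_apply, PiLp.smul_apply, smul_eq_mul, mul_assoc]
  rfl

end TaylorFields

section StrongControl

variable {N ν n : ℕ} {e : Fin N → Fin ν → ℝ} {W : Euc N → Euc n → Euc n}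
  {X : (Fin N → ℕ) → VF n}

lemma mem_lieSpan_of_ne_zero (e : Fin N → Fin ν → ℝ) (X : (Fin N → ℕ) → VF n) {α : Fin N → ℕ}
    (hα : α ≠ 0) : (X α, degMulti e α) ∈ lieSpan (pureSet e X ∪ nonpureSet e X) := by
  refine LieGen.base ?_
  by_cases h : IsPureDeg (degMulti e α)
  exacts [Or.inl ⟨α, hα, h, rfl⟩, Or.inr ⟨α, hα, h, rfl⟩]

lemma FinsetStrongControlsW.mono {F G : Finset (VF n × Deg ν)}
    (h : FinsetStrongControlsW F e W) (hFG : F ⊆ G) : FinsetStrongControlsW G e W := by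
  classical
  obtain ⟨ρ', U, V, A, c, hρ', hU, h0U, hV, hUV, hc, hdeg, hW⟩ := h
  refine ⟨ρ', U, V, A, fun l => if hl : ↑l ∈ F then c ⟨l, hl⟩ else 0,
    hρ', hU, h0U, hV, hUV, fun l α => ?_, fun l α hl => ?_, fun t ht x hx => ?_⟩
  · by_cases hlF : (l : VF n × Deg ν) ∈ F
    · simpa only [dif_pos hlF] using hc ⟨l, hlF⟩ α
    · simp only [dif_neg hlF]
      exact contDiffOn_const
  · by_cases hlF : (l : VF n × Deg ν) ∈ F
    · simpa only [dif_pos hlF] using hdeg ⟨l, hlF⟩ α hl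
    · simp only [dif_neg hlF]
      rfl
  · set g : VF n × Deg ν → Euc n := fun l => if h : l ∈ F then
      ∑ α ∈ A, (c ⟨l, h⟩ α t x * monomial α t) • l.1 x else 0 with hg
    have hF : W t x = ∑ l ∈ F, g l := by
      rw [hW t ht x hx, ← Finset.sum_coe_sort F]
      exact Finset.sum_congr rfl fun l _ => by simp only [hg, dif_pos l.2]
    have hG : ∑ l ∈ F, g l = ∑ l ∈ G, g l :=
      Finset.sum_subset hFG fun l _ hl => dif_neg hl
    rw [hF, hG, ← Finset.sum_coe_sort G]
    refine Finset.sum_congr rfl fun l _ => ?_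
    by_cases hlF : (l : VF n × Deg ν) ∈ F
    · simp only [hg, dif_pos hlF]
    · simp only [hg, dif_neg hlF, Pi.zero_apply, zero_mul, zero_smul, Finset.sum_const_zero]

open scoped Classical in
lemma finsetStrongControlsW_image (e : Fin N → Fin ν → ℝ) {A : Finset (Fin N → ℕ)}
    {c : (Fin N → ℕ) → Euc N × Euc n → ℝ} (hc : ∀ α ∈ A, AnalyticAt ℝ (c α) 0)
    (hW : ∀ᶠ q in 𝓝 0, W q.1 q.2 = ∑ α ∈ A, (c α q * monomial α q.1) • X α q.2) :
    FinsetStrongControlsW (A.image fun α => (X α, degMulti e α)) e W := by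
  have hev : ∀ᶠ q in 𝓝 (0 : Euc N × Euc n), (∀ α ∈ A, AnalyticAt ℝ (c α) q) ∧
      W q.1 q.2 = ∑ α ∈ A, (c α q * monomial α q.1) • X α q.2 :=
    ((eventually_all_finset A).2 fun α hα => (hc α hα).eventually_analyticAt).and hW
  obtain ⟨r, hr, hball⟩ := eventually_nhds_iff_ball.1 hev
  have hr2 : 0 < r / 2 := half_pos hr
  refine ⟨r / 2, ball 0 (r / 2), ball 0 r, A, fun l α t x =>
    if α ∈ A ∧ (l : VF n × Deg ν) = (X α, degMulti e α) then c α (t, x) else 0,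
    hr2, isOpen_ball, mem_ball_self hr2, isOpen_ball, ?_, fun l α => ?_, fun l α hl => ?_,
    fun t ht x hx => ?_⟩
  · rw [ball_prod_same]
    exact closure_ball_subset_closedBall.trans (closedBall_subset_ball (half_lt_self hr))
  · beta_reduce
    split_ifs with h
    · exact fun q hq => ((hball q hq).1 α h.1).contDiffAt.contDiffWithinAt
    · exact contDiffOn_const
  · funext t x
    exact if_neg fun h => hl (congrArg Prod.snd h.2).symm
  · have hmem : (t, x) ∈ ball (0 : Euc N × Euc n) r := by
      rw [← Prod.mk_zero_zero, ← ball_prod_same]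
      exact prod_mono (ball_subset_ball (half_le_self hr.le))
        (ball_subset_ball (half_le_self hr.le)) ⟨ht, hx⟩
    rw [(hball _ hmem).2, Finset.sum_comm]
    refine Finset.sum_congr rfl fun α hα => ?_
    rw [Finset.sum_eq_single_of_mem ⟨_, Finset.mem_image_of_mem _ hα⟩ (Finset.mem_univ _)]
    · beta_reduce
      rw [if_pos ⟨hα, rfl⟩]
    intro l _ hl
    beta_reduce
    rw [if_neg fun h => hl (Subtype.ext h.2), zero_mul, zero_smul]

theorem IsTaylorFieldOf.exists_finsetStrongControlsW (e : Fin N → Fin ν → ℝ) {U : Set (Euc n)}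
    (hX : IsTaylorFieldOf W U X) (hU : U ∈ 𝓝 (0 : Euc n))
    (hW : AnalyticAt ℝ (fun q : Euc N × Euc n => W q.1 q.2) 0) :
    ∃ F : Finset (VF n × Deg ν),
      ↑F ⊆ lieSpan (pureSet e X ∪ nonpureSet e X) ∧ FinsetStrongControlsW F e W := by
  classical
  obtain ⟨A, c, hc, hcW⟩ := hX.exists_eq_sum_smul hU hW
  refine ⟨(A.erase 0).image fun α => (X α, degMulti e α), ?_,
    finsetStrongControlsW_image e (fun α _ => hc α) ?_⟩
  · rw [Finset.coe_image, image_subset_iff]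
    exact fun α hα => mem_lieSpan_of_ne_zero e X (Finset.ne_of_mem_erase hα)
  · filter_upwards [hcW] with q hq
    rw [hq, Finset.sum_erase]
    rw [hX.1, Pi.zero_apply, smul_zero]

end StrongControl

end Zhang

open scoped Classical in
theorem statement_4_general {N ν n : ℕ} (e : Fin N → Fin ν → ℝ)
    (W : Euc N → Euc n → Euc n) (hW : AnalyticAt ℝ (fun q : Euc N × Euc n => W q.1 q.2) 0)
    (U : Set (Euc n)) (hU : U ∈ 𝓝 (0 : Euc n))
    (X : (Fin N → ℕ) → VF n) (hX : IsTaylorFieldOf W U X) :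
    (∃ F : Finset (VF n × Deg ν),
      ↑F ⊆ lieSpan (pureSet e X ∪ nonpureSet e X) ∧ FinsetStrongControlsW F e W) ∧
    (∀ F : Finset (VF n × Deg ν), ↑F ⊆ lieSpan (pureSet e X ∪ nonpureSet e X) →
      FinsetStrongControlsW F e W →
      ∀ G : Finset (VF n × Deg ν), ↑G ⊆ lieSpan (pureSet e X ∪ nonpureSet e X) →
        FinsetStrongControlsW (F ∪ G) e W) ∧
    (∀ S' : Finset (VF n × Deg ν), ↑S' ⊆ lieSpan (pureSet e X ∪ nonpureSet e X) →
      ∃ F : Finset (VF n × Deg ν), S' ⊆ F ∧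
        ↑F ⊆ lieSpan (pureSet e X ∪ nonpureSet e X) ∧ FinsetStrongControlsW F e W) := by
  obtain ⟨F, hF, hFW⟩ := hX.exists_finsetStrongControlsW e hU hW
  refine ⟨⟨F, hF, hFW⟩, fun F' _ hF' G _ => hF'.mono Finset.subset_union_left, fun S' hS' =>
    ⟨F ∪ S', Finset.subset_union_right, ?_, hFW.mono Finset.subset_union_left⟩⟩
  rw [Finset.coe_union]
  exact union_subset hF hS'

open scoped Classical in
/-- Theorem 5.3(ii): for real analytic `γ`, a finite subset of
`ℒ(𝒫 ∪ 𝒩)` strongly controls `W`; moreover such finite subsets may be enlarged by any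
finite subset of `ℒ(𝒫 ∪ 𝒩)`, and may be chosen to contain any given finite subset. -/
theorem statement_4 {N ν n : ℕ} (hn : 0 < n)
    (e : Fin N → Fin ν → ℝ) (he : AdmissibleE e)
    (γ : Euc N → Euc n → Euc n) (ρ₀ : ℝ) (hρ₀ : 0 < ρ₀)
    (U₀ : Set (Euc n)) (hU₀ : IsOpen U₀) (h0U₀ : (0 : Euc n) ∈ U₀)
    (hγ : AnalyticOnNhd ℝ (fun q : Euc N × Euc n => γ q.1 q.2) (ball 0 ρ₀ ×ˢ U₀))
    (hγ0 : ∀ x ∈ U₀, γ 0 x = x)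
    (ρ₁ : ℝ) (U₁ : Set (Euc n)) (hρ₁ : 0 < ρ₁) (hρ₁' : ρ₁ ≤ ρ₀)
    (hU₁ : IsOpen U₁) (h0U₁ : (0 : Euc n) ∈ U₁) (hU₁' : U₁ ⊆ U₀)
    (W : Euc N → Euc n → Euc n) (hW : IsWFor γ ρ₁ U₁ W)
    (X : (Fin N → ℕ) → VF n) (hX : IsTaylorFieldOf W U₁ X) :
    (∃ F : Finset (VF n × Deg ν),
      ↑F ⊆ lieSpan (pureSet e X ∪ nonpureSet e X) ∧ FinsetStrongControlsW F e W) ∧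
    (∀ F : Finset (VF n × Deg ν), ↑F ⊆ lieSpan (pureSet e X ∪ nonpureSet e X) →
      FinsetStrongControlsW F e W →
      ∀ G : Finset (VF n × Deg ν), ↑G ⊆ lieSpan (pureSet e X ∪ nonpureSet e X) →
        FinsetStrongControlsW (F ∪ G) e W) ∧
    (∀ S' : Finset (VF n × Deg ν), ↑S' ⊆ lieSpan (pureSet e X ∪ nonpureSet e X) →
      ∃ F : Finset (VF n × Deg ν), S' ⊆ F ∧
        ↑F ⊆ lieSpan (pureSet e X ∪ nonpureSet e X) ∧ FinsetStrongControlsW F e W) := by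
  have hU : U₁ ∈ 𝓝 (0 : Euc n) := hU₁.mem_nhds h0U₁
  exact statement_4_general e W (hW.analyticAt hρ₁ hU (hγ 0 ⟨mem_ball_self hρ₀, h0U₀⟩)
    fun x hx => hγ0 x (hU₁' hx)) U₁ hU X hX
end
end
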